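/- For every integer r ≥ 2 there exists a constant C = C(r) > 0 such that for every n ≥ 1 there is an r-uniform hypergraph that is universal for 𝓕^(r)(n,2), has at most C·n vertices, and has at most C·n^{r/2} edges. -/

import Mathlib

/-!
A hypergraph of maximum degree two is dual to a multigraph: its edges become vertices, and its
vertices become edges of the multigraph, called *items* here, an item `i : I` having the ends `p i`
and `q i`. Doubling the hypergraph makes this multigraph loopless and `r`-regular
(`universal_of_schedule`).

**The host.** The host vertices are triples in `X × X × Fin C`, where `|X| = O(√n)` and `X` carries
twenty self-maps, viewed as the arcs of a digraph. The host edges are the `r`-sets whose `2r`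
coordinates in `X` lie within two steps of `r` points of `X`, so there are
`O(|X| ^ r) = O(n ^ (r / 2))` of them (`exists_host`). An item with times `θA i` and `θB i` is placed
at the points reached at these times by two walks on `X`, the third coordinate separating the items
that share both points. The items at a vertex then form a host edge as soon as their `2r` times fall
into `r` groups of diameter at most two. Such a choice of times is called a schedule
(`HasSchedule`).

**The walks.** For the placement to be injective, each pair of positions may receive only `O(1)`
items. If the self-maps form an expander (`exists_expander`), then a walk can avoid adaptively
chosen forbidden sets of density at most `1/4`, provided that these react with a delay of order
`log |X|` (`exists_walk`); forbidding the overloaded points bounds all loads (`exists_walk_load`).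
The delay would cost a logarithmic factor. It is avoided by recording the time modulo a number `T` of
order `log |X|` as part of the second position (`exists_core`).

**Schedules for even `r`.** The items at each vertex are paired. Paired items form a graph of maximum
degree two, so they can be laid out with paired items at distance at most one and `O(1)` items per
time (`exists_layout`). Using this layout for both coordinates gives `r/2 + r/2` groups
(`hasSchedule_of_even`).

**Schedules for odd `r`.** One item at each vertex is left over. If the left-over items formed a
perfect matching, an item of it could be moved next to another item at its `p`-end in the first
coordinate, and next to another item at its `q`-end in the second coordinate, making
`(r-1)/2 + (r-1)/2 + 1` groups at each vertex. By Tutte's theorem, only odd sets of vertices with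
fewer than `r` outgoing items obstruct a perfect matching. Take a maximal disjoint family of minimal
such sets `K` (`exists_family`). After contracting them, a matching covers all other vertices
(`exists_outer_matching`), and each `K` can be matched internally up to one prescribed vertex
(`exists_inner_matching`), chosen as the one covered by the outer matching if there is one.

The exceptional vertices that remain uncovered are called tokens. At a token the left-over item is
instead linked to the first item in the layout of the first coordinate (`tokenGraph`). This creates
vertices of degree three, and the layout still exists if every component has bounded total excess.
To guarantee this, each token `x` in `K` receives a set `Q x` of unmatched items inside `K` which
has even degree everywhere and contains items at `x` (`exists_even_items`). Pairing items of `Q x`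
only with each other, and starting with one of them at `x`, makes `Q x` a union of components of
the pairing graph, so a component of the token graph consists of one component of the pairing graph
with some of these sets attached. It contains at most two tokens, since the left-over item at a token
uses up one of the at most two missing ends of a path (`hasSchedule_of_odd`).
-/

/-- `EH` (a set of edges on the vertex set `Fin N`) is the edge set of an `r`-uniform
hypergraph that is universal for the family `𝓕^(r)(n,Δ)` of `r`-uniform hypergraphs with
at most `n` vertices and maximum vertex degree at most `Δ`. -/
def HypergraphUniversal (r n Δ N : ℕ) (EH : Finset (Finset (Fin N))) : Prop :=
  ∀ EF : Finset (Finset (Fin n)),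
    (∀ e ∈ EF, e.card = r) →
    (∀ v : Fin n, (EF.filter (fun e => v ∈ e)).card ≤ Δ) →
    ∃ φ : Fin n → Fin N, Function.Injective φ ∧ ∀ e ∈ EF, e.image φ ∈ EH

/-! ### An expander from the union bound -/

/-- Some twenty self-maps of `X` connect any two quarters of `X`. For random self-maps, a given pair
of quarters stays unconnected with probability at most `(3 / 4) ^ (5 * |X|)`, and there are at most
`4 ^ |X|` pairs; the union bound works since `4 * (3 / 4) ^ 5 < 1`. -/
theorem exists_expander (X : Type) [Fintype X] [DecidableEq X] [Nonempty X] :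
    ∃ f : Fin 20 → X → X, ∀ A M : Finset X, Fintype.card X ≤ 4 * A.card →
      Fintype.card X ≤ 4 * M.card → ∃ x ∈ A, ∃ j, f j x ∈ M := by
  classical
  by_contra hcon
  push Not at hcon
  set W := Fintype.card X with hW
  have hWpos : 0 < W := Fintype.card_pos
  -- the assignments avoiding `M` on `A`
  let bad : Finset X × Finset X → Finset (Fin 20 → X → X) := fun AM =>
    Fintype.piFinset fun _ => Fintype.piFinset fun x => if x ∈ AM.1 then AM.2ᶜ else Finset.univ
  let pairs : Finset (Finset X × Finset X) :=
    Finset.univ.filter fun AM => W ≤ 4 * AM.1.card ∧ W ≤ 4 * AM.2.card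
  have hcover : (Finset.univ : Finset (Fin 20 → X → X)) ⊆ pairs.biUnion bad := by
    intro f _
    obtain ⟨A, M, hA, hM, h⟩ := hcon f
    refine Finset.mem_biUnion.2 ⟨(A, M), by simp [pairs, hA, hM], ?_⟩
    simp only [bad, Fintype.mem_piFinset]
    intro j x
    split_ifs with hx
    · simpa using h x hx j
    · simp
  have hbad : ∀ AM ∈ pairs, ((bad AM).card : ℝ) ≤ (3 / 4 : ℝ) ^ (5 * W) * (W : ℝ) ^ (20 * W) := by
    rintro ⟨A, M⟩ hAM
    simp only [pairs, Finset.mem_filter, Finset.mem_univ, true_and] at hAM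
    obtain ⟨hA, hM⟩ := hAM
    have hcard : (bad (A, M)).card = (W - M.card) ^ (20 * A.card) * W ^ (20 * (W - A.card)) := by
      simp only [bad, Fintype.card_piFinset, Finset.prod_const, Finset.card_univ, Fintype.card_fin]
      have : ∀ x : X, (if x ∈ A then Mᶜ else Finset.univ).card =
          if x ∈ A then W - M.card else W := by
        intro x; split_ifs
        · rw [Finset.card_compl]
        · rw [Finset.card_univ]
      simp only [this]
      rw [Finset.prod_ite]
      simp only [Finset.prod_const, Finset.filter_mem_eq_inter, Finset.univ_inter]
      rw [show (Finset.univ.filter fun x => x ∉ A) = Aᶜ by ext; simp, Finset.card_compl, mul_pow,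
        ← pow_mul, ← pow_mul, mul_comm A.card, mul_comm (Fintype.card X - _)]
    have hMW : M.card ≤ W := Finset.card_le_univ M
    have hAW : A.card ≤ W := Finset.card_le_univ A
    rw [hcard]
    push_cast [hMW]
    have h1 : (W : ℝ) - M.card ≤ 3 / 4 * W := by
      have : (W : ℝ) ≤ 4 * M.card := by exact_mod_cast hM
      linarith
    have h0 : (0 : ℝ) ≤ (W : ℝ) - M.card := by
      have : (M.card : ℝ) ≤ W := by exact_mod_cast hMW
      linarith
    calc ((W : ℝ) - M.card) ^ (20 * A.card) * (W : ℝ) ^ (20 * (W - A.card))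
        ≤ (3 / 4 * W) ^ (20 * A.card) * (W : ℝ) ^ (20 * (W - A.card)) := by gcongr
      _ = (3 / 4 : ℝ) ^ (20 * A.card) * (W : ℝ) ^ (20 * W) := by
        rw [mul_pow, mul_assoc, ← pow_add]; congr 2; omega
      _ ≤ (3 / 4 : ℝ) ^ (5 * W) * (W : ℝ) ^ (20 * W) := by
        gcongr ?_ * _
        exact pow_le_pow_of_le_one (by norm_num) (by norm_num) (by omega)
  have h1 := Finset.card_le_card hcover
  have h2 : ((Finset.univ : Finset (Fin 20 → X → X)).card : ℝ) = (W : ℝ) ^ (20 * W) := by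
    simp [Finset.card_univ, pow_mul', ← hW]
  have h3 : ((pairs.biUnion bad).card : ℝ) ≤ (4 : ℝ) ^ W * ((3 / 4 : ℝ) ^ (5 * W) * (W : ℝ) ^ (20 * W)) := by
    calc ((pairs.biUnion bad).card : ℝ) ≤ ∑ AM ∈ pairs, ((bad AM).card : ℝ) := by
          exact_mod_cast Finset.card_biUnion_le
      _ ≤ pairs.card • ((3 / 4 : ℝ) ^ (5 * W) * (W : ℝ) ^ (20 * W)) := Finset.sum_le_card_nsmul _ _ _ hbad
      _ ≤ _ := by
        rw [nsmul_eq_mul]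
        gcongr
        have : pairs.card ≤ 4 ^ W := by
          refine (Finset.card_le_univ _).trans ?_
          simp only [Fintype.card_prod, Fintype.card_finset, ← hW]
          rw [← mul_pow]
          norm_num
        exact_mod_cast this
  have h4 : (W : ℝ) ^ (20 * W) ≤ (4 : ℝ) ^ W * ((3 / 4 : ℝ) ^ (5 * W) * (W : ℝ) ^ (20 * W)) := by
    exact h2.symm.le.trans ((Nat.cast_le.2 h1).trans h3)
  have h5 : (4 : ℝ) ^ W * (3 / 4 : ℝ) ^ (5 * W) < 1 := by
    rw [pow_mul, ← mul_pow]
    exact pow_lt_one₀ (by norm_num) (by norm_num) (by omega)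
  have h6 : (0 : ℝ) < (W : ℝ) ^ (20 * W) := by positivity
  nlinarith

/-! ### Walks avoiding adaptively chosen forbidden sets -/

/-- The expansion property of `exists_expander` for a family `f` of self-maps, viewed as a digraph
with arcs `x → f j x`. -/
def IsExpanding {X : Type} [Fintype X] (f : Fin 20 → X → X) : Prop :=
  ∀ A M : Finset X, Fintype.card X ≤ 4 * A.card → Fintype.card X ≤ 4 * M.card →
    ∃ x ∈ A, ∃ j, f j x ∈ M

section Walk

variable {X : Type} [DecidableEq X]

/-- The points reachable from `A` by `j`-step walks whose `(i+1)`-st point avoids `g i`. -/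
def reach (f : Fin 20 → X → X) (g : ℕ → Finset X) (A : Finset X) : ℕ → Finset X
  | 0 => A
  | j + 1 => ((reach f g A j).biUnion fun x => Finset.univ.image fun k => f k x) \ g j

theorem reach_union (f : Fin 20 → X → X) (g : ℕ → Finset X) (A B : Finset X) (j : ℕ) :
    reach f g (A ∪ B) j = reach f g A j ∪ reach f g B j := by
  induction j with
  | zero => rfl
  | succ j ih => simp only [reach, ih, Finset.union_biUnion, Finset.union_sdiff_distrib]

theorem reach_empty (f : Fin 20 → X → X) (g : ℕ → Finset X) (j : ℕ) :
    reach f g ∅ j = ∅ := by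
  induction j with
  | zero => rfl
  | succ j ih => simp [reach, ih]

theorem reach_congr (f : Fin 20 → X → X) (g g' : ℕ → Finset X) (A : Finset X) (j : ℕ)
    (h : ∀ i < j, g i = g' i) : reach f g A j = reach f g' A j := by
  induction j with
  | zero => rfl
  | succ j ih => simp only [reach, ih fun i hi => h i (by omega), h j (by omega)]

theorem exists_path_of_mem_reach (f : Fin 20 → X → X) (g : ℕ → Finset X) (x : X) (j : ℕ) :
    ∀ y ∈ reach f g {x} j, ∃ p : ℕ → X, p 0 = x ∧ p j = y ∧
      ∀ i < j, (∃ k, p (i + 1) = f k (p i)) ∧ p (i + 1) ∉ g i := by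
  induction j with
  | zero =>
    intro y hy
    simp only [reach, Finset.mem_singleton] at hy
    exact ⟨fun _ => x, rfl, hy.symm, by simp⟩
  | succ j ih =>
    intro y hy
    simp only [reach, Finset.mem_sdiff, Finset.mem_biUnion, Finset.mem_image, Finset.mem_univ,
      true_and] at hy
    obtain ⟨⟨z, hz, k, hk⟩, hyg⟩ := hy
    obtain ⟨p, h0, hj, hp⟩ := ih z hz
    refine ⟨fun i => if i ≤ j then p i else y, by simp [h0], by simp, ?_⟩
    intro i hi
    rcases Nat.lt_or_eq_of_le (Nat.le_of_lt_succ hi) with h | h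
    · have h1 : i ≤ j := h.le
      have h2 : i + 1 ≤ j := h
      simp only [if_pos h1, if_pos h2]
      exact hp i h
    · subst h
      simp only [le_refl, if_true, show ¬ (i + 1 ≤ i) by omega, if_false]
      exact ⟨⟨k, by rw [hj, hk]⟩, hyg⟩

variable [Fintype X]

/-- A reach of at least a quarter of `X` grows in one step to more than three quarters, of which
the forbidden set removes at most one quarter. -/
theorem reach_succ_large {f : Fin 20 → X → X} (hf : IsExpanding f) {g : ℕ → Finset X}
    (hg : ∀ i, 4 * (g i).card ≤ Fintype.card X) {A : Finset X} {j : ℕ}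
    (hA : Fintype.card X ≤ 4 * (reach f g A j).card) :
    Fintype.card X < 2 * (reach f g A (j + 1)).card := by
  set Γ := (reach f g A j).biUnion fun x => Finset.univ.image fun k => f k x with hΓ
  have h1 : 4 * Γᶜ.card < Fintype.card X := by
    by_contra! h
    obtain ⟨x, hx, k, hk⟩ := hf _ _ hA h
    apply Finset.mem_compl.1 hk
    exact Finset.mem_biUnion.2 ⟨x, hx, Finset.mem_image.2 ⟨k, Finset.mem_univ _, rfl⟩⟩
  have h2 : Γ.card ≤ (Γ \ g j).card + (g j).card := by
    have := Finset.le_card_sdiff (g j) Γ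
    omega
  have h3 := Finset.card_add_card_compl Γ
  have h4 := hg j
  change _ < 2 * (Γ \ g j).card
  omega

/-- Halving: some single start in a set with large reach itself gets a large reach after
logarithmically many further steps. -/
theorem exists_reach_singleton_large {f : Fin 20 → X → X} (hf : IsExpanding f) {g : ℕ → Finset X}
    (hg : ∀ i, 4 * (g i).card ≤ Fintype.card X) [Nonempty X] (k : ℕ) :
    ∀ (A : Finset X) (j : ℕ), A.card ≤ 2 ^ k → Fintype.card X ≤ 4 * (reach f g A j).card →
      ∃ x ∈ A, Fintype.card X < 2 * (reach f g {x} (j + k + 1)).card := by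
  induction k with
  | zero =>
    intro A j hA h
    have hne : A.Nonempty := by
      rw [Finset.nonempty_iff_ne_empty]
      rintro rfl
      have : 0 < Fintype.card X := Fintype.card_pos
      simp [reach_empty] at h
    have h1 : A.card = 1 := by
      have := hne.card_pos
      simp at hA; omega
    obtain ⟨x, rfl⟩ := Finset.card_eq_one.1 h1
    exact ⟨x, by simp, reach_succ_large hf hg h⟩
  | succ k ih =>
    intro A j hA h
    obtain ⟨B, hBA, hB⟩ := Finset.exists_subset_card_eq (s := A) (n := A.card / 2) (by omega)
    have hBc : (A \ B).card = A.card - A.card / 2 := by rw [Finset.card_sdiff_of_subset hBA, hB]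
    have h2 := reach_succ_large hf hg h
    have h3 : reach f g A (j + 1) = reach f g B (j + 1) ∪ reach f g (A \ B) (j + 1) := by
      rw [← reach_union, Finset.union_sdiff_of_subset hBA]
    have h4 := Finset.card_union_le (reach f g B (j + 1)) (reach f g (A \ B) (j + 1))
    rw [h3] at h2
    rw [pow_succ] at hA
    rcases le_or_gt (Fintype.card X) (4 * (reach f g B (j + 1)).card) with h5 | h5
    · obtain ⟨x, hx, h6⟩ := ih B (j + 1) (by omega) h5
      exact ⟨x, hBA hx, by convert h6 using 4; omega⟩
    · obtain ⟨x, hx, h6⟩ := ih (A \ B) (j + 1) (by omega) (by omega)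
      exact ⟨x, (Finset.mem_sdiff.1 hx).1, by convert h6 using 4; omega⟩

/-- The starts from which more than half of `X` is reachable in `ℓ` steps avoiding `g`. -/
def good (f : Fin 20 → X → X) (ℓ : ℕ) (g : ℕ → Finset X) : Finset X :=
  Finset.univ.filter fun x => Fintype.card X < 2 * (reach f g {x} ℓ).card

theorem good_congr (f : Fin 20 → X → X) (ℓ : ℕ) (g g' : ℕ → Finset X)
    (h : ∀ i < ℓ, g i = g' i) : good f ℓ g = good f ℓ g' := by
  ext x; simp [good, reach_congr f g g' {x} ℓ h]

/-- More than three quarters of all starts are good: otherwise the bad ones make up a quarter of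
`X`, and `exists_reach_singleton_large` finds a good one among them. -/
theorem good_large {f : Fin 20 → X → X} (hf : IsExpanding f) {g : ℕ → Finset X}
    [Nonempty X] {k : ℕ} (hX : Fintype.card X ≤ 2 ^ k)
    (hg : ∀ i < k + 1, 4 * (g i).card ≤ Fintype.card X) :
    3 * Fintype.card X < 4 * (good f (k + 1) g).card := by
  classical
  let g' : ℕ → Finset X := fun i => if i < k + 1 then g i else ∅
  have hgg' : good f (k + 1) g = good f (k + 1) g' :=
    good_congr _ _ _ _ fun i hi => by simp only [g', if_pos hi]
  have hg' : ∀ i, 4 * (g' i).card ≤ Fintype.card X := by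
    intro i
    by_cases hi : i < k + 1
    · simpa only [g', if_pos hi] using hg i hi
    · simp only [g', if_neg hi, Finset.card_empty, mul_zero, zero_le]
  rw [hgg']
  by_contra! h
  have h3 := Finset.card_add_card_compl (good f (k + 1) g')
  obtain ⟨x, hx, h1⟩ := exists_reach_singleton_large hf hg' k (good f (k + 1) g')ᶜ 0
    ((Finset.card_le_univ _).trans hX) (by simp only [reach]; omega)
  apply Finset.mem_compl.1 hx
  simpa [good] using h1

/-- A walk in an expander can dodge forbidden sets of density at most `1/4`, provided that each of
them is determined by the walk before the previous chunk of `k + 1 > log₂ |X|` steps. -/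
theorem exists_walk {f : Fin 20 → X → X} (hf : IsExpanding f) [Nonempty X] {k : ℕ}
    (hX : Fintype.card X ≤ 2 ^ k) (forb : ℕ → (ℕ → X) → Finset X)
    (hforb : ∀ t Q, 4 * (forb t Q).card ≤ Fintype.card X)
    (hdep : ∀ t Q Q', (∀ s < (t / (k + 1) - 1) * (k + 1), Q s = Q' s) → forb t Q = forb t Q')
    (N : ℕ) :
    ∃ Q : ℕ → X, ∀ t < N, (∃ j, Q (t + 1) = f j (Q t)) ∧ Q t ∉ forb t Q := by
  set ℓ := k + 1 with hℓ
  -- `P` is the walk with one extra point in front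
  suffices H : ∀ K : ℕ, ∃ P : ℕ → X,
      (∀ t < K * ℓ, (∃ j, P (t + 1) = f j (P t)) ∧ P (t + 1) ∉ forb t fun s => P (s + 1)) ∧
      P (K * ℓ) ∈ good f ℓ fun j => forb (K * ℓ + j) fun s => P (s + 1) by
    obtain ⟨P, hP, -⟩ := H (N + 1)
    have hN : N + 1 ≤ (N + 1) * ℓ := Nat.le_mul_of_pos_right _ (by omega)
    exact ⟨fun s => P (s + 1), fun t ht => ⟨(hP (t + 1) (by omega)).1, (hP t (by omega)).2⟩⟩
  have hdiv : ∀ K j, j < ℓ → (K * ℓ + j) / ℓ = K := by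
    intro K j hj
    rw [mul_comm, Nat.mul_add_div (by omega), Nat.div_eq_of_lt hj, add_zero]
  intro K
  induction K with
  | zero =>
    obtain ⟨x₀⟩ := ‹Nonempty X›
    have hg := good_large hf hX (g := fun j => forb (0 * ℓ + j) fun _ => x₀)
      (fun i _ => hforb _ _)
    rw [← hℓ] at hg
    obtain ⟨x, hx⟩ : (good f ℓ fun j => forb (0 * ℓ + j) fun _ => x₀).Nonempty := by
      rw [← Finset.card_pos]; omega
    refine ⟨fun _ => x, by simp, ?_⟩
    rw [good_congr f ℓ _ (fun j => forb (0 * ℓ + j) fun _ => x₀)]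
    · exact hx
    · intro i hi
      apply hdep
      intro s hs
      rw [hdiv 0 i hi] at hs
      simp at hs
  | succ K ih =>
    obtain ⟨P, hP, hPK⟩ := ih
    have hreach : Fintype.card X <
        2 * (reach f (fun j => forb (K * ℓ + j) fun s => P (s + 1)) {P (K * ℓ)} ℓ).card := by
      simpa [good] using hPK
    have hgood := good_large hf hX (g := fun j => forb ((K + 1) * ℓ + j) fun s => P (s + 1))
      (fun i _ => hforb _ _)
    rw [← hℓ] at hgood
    obtain ⟨y, hy1, hy2⟩ : ∃ y, y ∈ reach f (fun j => forb (K * ℓ + j) fun s => P (s + 1))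
        {P (K * ℓ)} ℓ ∧ y ∈ good f ℓ fun j => forb ((K + 1) * ℓ + j) fun s => P (s + 1) := by
      by_contra! h
      have hd : Disjoint (reach f (fun j => forb (K * ℓ + j) fun s => P (s + 1)) {P (K * ℓ)} ℓ)
          (good f ℓ fun j => forb ((K + 1) * ℓ + j) fun s => P (s + 1)) :=
        Finset.disjoint_left.2 h
      have h1 := Finset.card_le_univ (reach f (fun j => forb (K * ℓ + j) fun s => P (s + 1))
        {P (K * ℓ)} ℓ ∪ (good f ℓ fun j => forb ((K + 1) * ℓ + j) fun s => P (s + 1)))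
      rw [Finset.card_union_of_disjoint hd] at h1
      omega
    obtain ⟨p, hp0, hpℓ, hp⟩ := exists_path_of_mem_reach _ _ _ _ y hy1
    let P' : ℕ → X := fun t => if t ≤ K * ℓ then P t else p (t - K * ℓ)
    have hP'le : ∀ t, t ≤ K * ℓ → P' t = P t := fun t ht => if_pos ht
    have hP'add : ∀ j, P' (K * ℓ + j) = p j := by
      intro j
      rcases Nat.eq_zero_or_pos j with rfl | hj
      · rw [add_zero, hP'le _ le_rfl, hp0]
      · simp only [P', if_neg (show ¬ K * ℓ + j ≤ K * ℓ by omega)]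
        congr 1; omega
    have hforbeq : ∀ t, t / ℓ ≤ K + 1 →
        (forb t fun s => P' (s + 1)) = forb t fun s => P (s + 1) := by
      intro t ht
      apply hdep
      intro s hs
      apply hP'le
      have : (t / ℓ - 1) * ℓ ≤ K * ℓ := Nat.mul_le_mul_right _ (by omega)
      omega
    have hKK : (K + 1) * ℓ = K * ℓ + ℓ := by ring
    refine ⟨P', ?_, ?_⟩
    · intro t ht
      rw [hforbeq t (Nat.div_lt_iff_lt_mul (by omega) |>.2 ht).le]
      rcases lt_or_ge t (K * ℓ) with h | h
      · rw [hP'le t h.le, hP'le (t + 1) h]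
        exact hP t h
      · obtain ⟨j, rfl⟩ := Nat.exists_eq_add_of_le h
        rw [add_assoc, hP'add, hP'add]
        exact hp j (by omega)
    · rw [hKK, hP'add, hpℓ, ← hKK, good_congr f ℓ _ _ fun i hi => hforbeq _ (hdiv _ _ hi).le]
      exact hy2

end Walk

/-! ### Placing timed items with bounded loads -/

/-- Items `i` carrying a time `θ i` and a class `κ i` are placed at the points `Q (θ i)` of a walk,
with at most `L + E` items of each class at each point: points already carrying `L` items of the
class of the current item are forbidden, and `E` bounds the number of items of one class within
the two most recent chunks, to which the forbidden sets must not react. -/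
theorem exists_walk_load {X : Type} [Fintype X] [DecidableEq X] {f : Fin 20 → X → X}
    (hf : IsExpanding f) [Nonempty X] {k : ℕ} (hX : Fintype.card X ≤ 2 ^ k) {I Ψ : Type}
    [Fintype I] [DecidableEq Ψ] (θ : I → ℕ) (κ : I → Ψ) (c L E : ℕ) (hL : 0 < L)
    (hc : ∀ t, (Finset.univ.filter fun i => θ i = t).card ≤ c)
    (hclass : ∀ ψ, 4 * c * (Finset.univ.filter fun i => κ i = ψ).card ≤ L * Fintype.card X)
    (hwin : ∀ i₀, (Finset.univ.filter fun i => κ i = κ i₀ ∧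
      (θ i₀ / (k + 1) - 1) * (k + 1) ≤ θ i ∧ θ i ≤ θ i₀).card ≤ E)
    (N : ℕ) (hN : ∀ i, θ i < N) :
    ∃ Q : ℕ → X, (∀ t < N, ∃ j, Q (t + 1) = f j (Q t)) ∧
      ∀ x ψ, (Finset.univ.filter fun i => Q (θ i) = x ∧ κ i = ψ).card ≤ L + E := by
  classical
  set ℓ := k + 1 with hℓ
  let pre : ℕ → (ℕ → X) → X → Ψ → Finset I := fun t Q x ψ =>
    Finset.univ.filter fun i => θ i < (t / ℓ - 1) * ℓ ∧ Q (θ i) = x ∧ κ i = ψ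
  let forb : ℕ → (ℕ → X) → Finset X := fun t Q =>
    Finset.univ.filter fun x => ∃ i, θ i = t ∧ L ≤ (pre t Q x (κ i)).card
  have hforb : ∀ t Q, 4 * (forb t Q).card ≤ Fintype.card X := by
    intro t Q
    let B : I → Finset X := fun i => Finset.univ.filter fun x => L ≤ (pre t Q x (κ i)).card
    have hB : ∀ i, 4 * c * (L * (B i).card) ≤ L * Fintype.card X := by
      intro i
      refine le_trans (Nat.mul_le_mul_left _ ?_) (hclass (κ i))
      calc L * (B i).card = ∑ x ∈ B i, L := by simp [mul_comm]
        _ ≤ ∑ x ∈ B i, (pre t Q x (κ i)).card :=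
          Finset.sum_le_sum fun x hx => (Finset.mem_filter.1 hx).2
        _ = ((B i).biUnion fun x => pre t Q x (κ i)).card := by
          rw [Finset.card_biUnion]
          intro x _ y _ hxy
          refine Finset.disjoint_left.2 fun j hj hj' => hxy ?_
          simp only [pre, Finset.mem_filter] at hj hj'
          rw [← hj.2.2.1, ← hj'.2.2.1]
        _ ≤ _ := by
          apply Finset.card_le_card
          intro j hj
          simp only [pre, Finset.mem_biUnion, Finset.mem_filter, Finset.mem_univ,
            true_and] at hj ⊢
          exact hj.choose_spec.2.2.2
    have hsub : forb t Q ⊆ (Finset.univ.filter fun i => θ i = t).biUnion B := by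
      intro x hx
      simp only [forb, Finset.mem_filter, Finset.mem_univ, true_and] at hx
      obtain ⟨i, hi, h⟩ := hx
      simp only [B, Finset.mem_biUnion, Finset.mem_filter, Finset.mem_univ, true_and]
      exact ⟨i, hi, h⟩
    rcases Nat.eq_zero_or_pos c with rfl | hcpos
    · have h0 : (Finset.univ.filter fun i => θ i = t) = ∅ := by
        simpa using hc t
      rw [h0] at hsub
      simp [Finset.subset_empty.1 (by simpa using hsub)]
    · have h1 : (c * L) * (4 * (forb t Q).card) ≤ (c * L) * Fintype.card X := by
        calc (c * L) * (4 * (forb t Q).card)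
            ≤ (c * L) * (4 * ∑ i ∈ Finset.univ.filter (fun i => θ i = t), (B i).card) := by
              gcongr
              exact (Finset.card_le_card hsub).trans Finset.card_biUnion_le
          _ = ∑ i ∈ Finset.univ.filter (fun i => θ i = t), 4 * c * (L * (B i).card) := by
              rw [← Finset.mul_sum, ← Finset.mul_sum]; ring
          _ ≤ (Finset.univ.filter (fun i => θ i = t)).card • (L * Fintype.card X) :=
              Finset.sum_le_card_nsmul _ _ _ fun i _ => hB i
          _ ≤ c * (L * Fintype.card X) := by
              rw [smul_eq_mul]; exact Nat.mul_le_mul_right _ (hc t)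
          _ = _ := by ring
      exact Nat.le_of_mul_le_mul_left h1 (by positivity)
  have hdep : ∀ t Q Q', (∀ s < (t / ℓ - 1) * ℓ, Q s = Q' s) → forb t Q = forb t Q' := by
    intro t Q Q' h
    have : ∀ x ψ, pre t Q x ψ = pre t Q' x ψ := by
      intro x ψ
      ext i
      simp only [pre, Finset.mem_filter, Finset.mem_univ, true_and]
      constructor
      · rintro ⟨h1, h2, h3⟩; exact ⟨h1, h _ h1 ▸ h2, h3⟩
      · rintro ⟨h1, h2, h3⟩; exact ⟨h1, (h _ h1).symm ▸ h2, h3⟩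
    simp only [forb, this]
  obtain ⟨Q, hQ⟩ := exists_walk hf hX forb hforb hdep N
  refine ⟨Q, fun t ht => (hQ t ht).1, fun x ψ => ?_⟩
  rcases (Finset.univ.filter fun i => Q (θ i) = x ∧ κ i = ψ).eq_empty_or_nonempty with h0 | hne
  · simp [h0]
  obtain ⟨i₀, hi₀, hmax⟩ := Finset.exists_max_image _ θ hne
  simp only [Finset.mem_filter, Finset.mem_univ, true_and] at hi₀ hmax
  have h1 := (hQ (θ i₀) (hN i₀)).2
  have h2 : (pre (θ i₀) Q x ψ).card < L := by
    by_contra! h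
    apply h1
    simp only [forb, Finset.mem_filter, Finset.mem_univ, true_and]
    exact ⟨i₀, rfl, by rw [hi₀.1, hi₀.2]; exact h⟩
  have h3 : (Finset.univ.filter fun i => Q (θ i) = x ∧ κ i = ψ) ⊆ pre (θ i₀) Q x ψ ∪
      Finset.univ.filter fun i => κ i = κ i₀ ∧ (θ i₀ / ℓ - 1) * ℓ ≤ θ i ∧ θ i ≤ θ i₀ := by
    intro i hi
    simp only [Finset.mem_filter, Finset.mem_univ, true_and, pre, Finset.mem_union] at hi ⊢
    have := hmax i hi
    rcases lt_or_ge (θ i) ((θ i₀ / ℓ - 1) * ℓ) with h | h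
    · exact Or.inl ⟨h, hi⟩
    · exact Or.inr ⟨by rw [hi.2, hi₀.2], h, this⟩
  have h4 := (Finset.card_le_card h3).trans (Finset.card_union_le _ _)
  have h5 := hwin i₀
  omega

/-- With `T = 2 * k + 3`, the number `T * 2 ^ k` is of order `√M` for a suitable `k`. -/
theorem exists_scale (M : ℕ) (hM : 1 ≤ M) : ∃ k : ℕ,
    ((2 * k + 3) * 2 ^ k) ^ 2 ≤ 9 * M ∧ M ≤ 2 * ((2 * k + 3) * 2 ^ k) ^ 2 := by
  have hex : ∃ k : ℕ, 9 * M < ((2 * k + 3) * 2 ^ k) ^ 2 := by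
    refine ⟨9 * M, ?_⟩
    have h1 : 1 ≤ 2 ^ (9 * M) := Nat.one_le_two_pow
    have h2 : 9 * M < (2 * (9 * M) + 3) * 2 ^ (9 * M) :=
      lt_of_lt_of_le (by omega) (Nat.le_mul_of_pos_right (2 * (9 * M) + 3) h1)
    exact h2.trans_le (Nat.le_self_pow two_ne_zero _)
  classical
  obtain ⟨k, hk, hmin⟩ : ∃ k, 9 * M < ((2 * k + 3) * 2 ^ k) ^ 2 ∧
      ∀ j < k, ¬ 9 * M < ((2 * j + 3) * 2 ^ j) ^ 2 :=
    ⟨Nat.find hex, Nat.find_spec hex, fun j hj => Nat.find_min hex hj⟩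
  obtain _ | k := k
  · norm_num at hk; omega
  refine ⟨k, not_lt.1 (hmin k (by omega)), ?_⟩
  have h1 : 3 * ((2 * (k + 1) + 3) * 2 ^ (k + 1)) ≤ 10 * ((2 * k + 3) * 2 ^ k) := by
    rw [pow_succ]
    have := Nat.zero_le (2 ^ k)
    nlinarith [Nat.zero_le (k * 2 ^ k)]
  have h2 := Nat.pow_le_pow_left h1 2
  rw [mul_pow, mul_pow 10] at h2
  omega

/-- A time not before the chunk of length `ℓ` preceding the chunk of `t` is less than `2 * ℓ` before
`t`. -/
theorem window_lt (ℓ t s : ℕ) (hℓ : 0 < ℓ) (h : (t / ℓ - 1) * ℓ ≤ s) : t < s + 2 * ℓ := by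
  have h1 := Nat.div_add_mod t ℓ
  have h2 := Nat.mod_lt t hℓ
  have h3 : (t / ℓ) * ℓ ≤ (t / ℓ - 1) * ℓ + ℓ := by
    rw [← Nat.succ_mul]; exact Nat.mul_le_mul_right _ (by omega)
  rw [mul_comm] at h1
  omega

/-- Two digraphs on `O(√M)` points, with walks such that for any two timings of items by times below
`M`, with at most `c` items at each time, every pair of positions receives `O(1)` items.

The second position includes the time modulo `T = 2 * k + 3`. The first walk spreads the items of
each phase so that every point carries `O(2 ^ k)` of them, and the logarithmic delay of the walk is
absorbed by this bound. For the second walk, items of equal phase within two chunks of length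
`k + 1` have equal times since `2 * (k + 1) < T`, so the delay costs only `c`. -/
theorem exists_core (c : ℕ) : ∃ C : ℕ, 0 < C ∧ ∀ M : ℕ, 1 ≤ M →
    ∃ (XA XB : Type) (_ : Fintype XA) (_ : Fintype XB) (_ : DecidableEq XA) (_ : DecidableEq XB)
      (FA : Fin 20 → XA → XA) (FB : Fin 20 → XB → XB),
      Fintype.card XA ^ 2 ≤ C * M ∧ Fintype.card XB ^ 2 ≤ C * M ∧
      ∀ (I : Type) [Fintype I] (θA θB : I → ℕ), (∀ i, θA i < M) → (∀ i, θB i < M) →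
        (∀ t, (Finset.univ.filter fun i => θA i = t).card ≤ c) →
        (∀ t, (Finset.univ.filter fun i => θB i = t).card ≤ c) →
        ∃ (PA : ℕ → XA) (PB : ℕ → XB),
          (∀ t < M, ∃ j, PA (t + 1) = FA j (PA t)) ∧ (∀ t < M, ∃ j, PB (t + 1) = FB j (PB t)) ∧
          ∀ a b, (Finset.univ.filter fun i => PA (θA i) = a ∧ PB (θB i) = b).card ≤ C := by
  classical
  rcases Nat.eq_zero_or_pos c with rfl | hc0
  · refine ⟨1, one_pos, fun M hM => ⟨Unit, Unit, inferInstance, inferInstance, inferInstance,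
      inferInstance, fun _ => id, fun _ => id, by simpa using hM, by simpa using hM, ?_⟩⟩
    intro I _ θA θB _ _ hA hB
    refine ⟨fun _ => (), fun _ => (), fun _ _ => ⟨0, rfl⟩, fun _ _ => ⟨0, rfl⟩, fun a b => ?_⟩
    have : IsEmpty I := ⟨fun i => by
      have := hA (θA i)
      simp only [Nat.le_zero, Finset.card_eq_zero] at this
      exact Finset.notMem_empty i (this ▸ by simp)⟩
    simp
  set K := 12 * c ^ 2 + 8 * c with hK
  refine ⟨36 + 4 * c * K + c, by omega, fun M hM => ?_⟩
  obtain ⟨k, hk1, hk2⟩ := exists_scale M hM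
  set W := 2 ^ k with hW
  set T := 2 * k + 3 with hT
  have : NeZero T := ⟨by omega⟩
  have hWpos : 0 < W := by positivity
  have hkW : k + 1 ≤ W := Nat.lt_two_pow_self
  set k' := Nat.clog 2 (T * W) with hk'
  have hTW : 1 < T * W := by nlinarith
  have hs1 : T * W ≤ 2 ^ k' := Nat.le_pow_clog (by norm_num) _
  have hs2 : 2 ^ k' ≤ 2 * (T * W) := by
    have h := Nat.pow_pred_clog_lt_self (b := 2) (by norm_num) hTW
    have h' : 0 < k' := Nat.clog_pos (by norm_num) hTW
    rw [← hk'] at h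
    obtain ⟨m, hm⟩ := Nat.exists_eq_succ_of_ne_zero h'.ne'
    rw [hm] at h ⊢
    rw [Nat.pow_succ]
    simp at h
    omega
  have hk'2 : k' ≤ 2 * k + 2 := by
    apply Nat.clog_le_of_le_pow
    calc T * W ≤ (4 * W) * W := Nat.mul_le_mul_right _ (by omega)
      _ = 2 ^ (2 * k + 2) := by rw [hW]; ring
  obtain ⟨fA, hfA⟩ := exists_expander (Fin (2 ^ k'))
  obtain ⟨fB, hfB⟩ := exists_expander (Fin W)
  have hsq : (2 ^ k') ^ 2 ≤ 36 * M := by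
    calc (2 ^ k') ^ 2 ≤ (2 * (T * W)) ^ 2 := Nat.pow_le_pow_left hs2 2
      _ = 4 * (T * W) ^ 2 := by ring
      _ ≤ _ := by omega
  refine ⟨Fin (2 ^ k'), ZMod T × Fin W, inferInstance, inferInstance, inferInstance, inferInstance,
    fA, fun j z => (z.1 + 1, fB j z.2), ?_, ?_, ?_⟩
  · rw [Fintype.card_fin]
    exact hsq.trans (Nat.mul_le_mul_right _ (by omega))
  · rw [Fintype.card_prod, ZMod.card, Fintype.card_fin]
    exact hk1.trans (Nat.mul_le_mul_right _ (by omega))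
  intro I _ θA θB hθA hθB hA hB
  have hcast : ∀ s t : ℕ, ((s : ZMod T) = (t : ZMod T)) ↔ s % T = t % T := fun s t =>
    ZMod.natCast_eq_natCast_iff' s t T
  -- items with a prescribed phase of the second time
  have hphase : ∀ ψ : ZMod T, (Finset.univ.filter fun i => ((θB i : ℕ) : ZMod T) = ψ).card ≤
      c * (M / T + 1) := by
    intro ψ
    have := Finset.card_le_mul_card_image_of_maps_to (f := fun i => θB i / T)
      (s := Finset.univ.filter fun i => ((θB i : ℕ) : ZMod T) = ψ)
      (t := Finset.range (M / T + 1)) ?_ c ?_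
    · simpa using this
    · intro i _
      rw [Finset.mem_range, Nat.lt_succ_iff]
      exact Nat.div_le_div_right (hθB i).le
    · intro u _
      refine le_trans (Finset.card_le_card ?_) (hB (T * u + ψ.val))
      intro i hi
      simp only [Finset.mem_filter, Finset.mem_univ, true_and] at hi ⊢
      rw [← hi.2, ← hi.1, ZMod.val_natCast]
      exact (Nat.div_add_mod _ _).symm
  have hphase' : ∀ ψ : ZMod T, (Finset.univ.filter fun i => ((θB i : ℕ) : ZMod T) = ψ).card ≤
      3 * c * (T * W * W) := by
    intro ψ
    have h1 : M / T ≤ 2 * (T * W * W) := by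
      apply Nat.div_le_of_le_mul
      calc M ≤ 2 * (T * W) ^ 2 := hk2
        _ = _ := by ring
    have h2 : 1 ≤ T * W * W := Nat.mul_pos (by omega) hWpos
    calc _ ≤ c * (M / T + 1) := hphase ψ
      _ ≤ c * (3 * (T * W * W)) := Nat.mul_le_mul_left _ (by omega)
      _ = _ := by ring
  obtain ⟨PA, hPA, hloadA⟩ := exists_walk_load (f := fA) hfA (k := k') (by simp) θA
    (fun i => ((θB i : ℕ) : ZMod T)) c (12 * c ^ 2 * W) (8 * c * W) (by positivity) hA
    (by
      intro ψ
      calc _ ≤ 4 * c * (3 * c * (T * W * W)) := Nat.mul_le_mul_left _ (hphase' ψ)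
        _ = 12 * c ^ 2 * W * (T * W) := by ring
        _ ≤ 12 * c ^ 2 * W * Fintype.card (Fin (2 ^ k')) :=
          Nat.mul_le_mul_left _ (by simpa using hs1))
    (by
      intro i₀
      have := Finset.card_le_mul_card_image_of_maps_to (f := θA)
        (s := Finset.univ.filter fun i => ((θB i : ℕ) : ZMod T) = ((θB i₀ : ℕ) : ZMod T) ∧
          (θA i₀ / (k' + 1) - 1) * (k' + 1) ≤ θA i ∧ θA i ≤ θA i₀)
        (t := Finset.Icc (θA i₀ + 1 - 2 * (k' + 1)) (θA i₀)) ?_ c ?_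
      · refine this.trans ?_
        rw [Nat.card_Icc]
        calc c * (θA i₀ + 1 - (θA i₀ + 1 - 2 * (k' + 1))) ≤ c * (8 * W) :=
              Nat.mul_le_mul_left _ (by omega)
          _ = _ := by ring
      · intro i hi
        simp only [Finset.mem_filter, Finset.mem_univ, true_and] at hi
        have := window_lt _ _ _ (by omega) hi.2.1
        rw [Finset.mem_Icc]
        omega
      · intro t _
        exact (Finset.card_le_card (Finset.filter_subset_filter _ (Finset.subset_univ _))).trans
          (hA t))
    M hθA
  obtain ⟨Q, hQ, hloadB⟩ := exists_walk_load (f := fB) hfB (k := k) (by simp [hW]) θB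
    (fun i => (PA (θA i), ((θB i : ℕ) : ZMod T))) c (4 * c * K) c (by positivity) hB
    (by
      rintro ⟨a, ψ⟩
      have h := hloadA a ψ
      have h1 : (Finset.univ.filter fun i => (PA (θA i), ((θB i : ℕ) : ZMod T)) = (a, ψ)).card ≤
          K * W := by
        simp only [Prod.mk.injEq]
        refine h.trans (le_of_eq ?_)
        rw [hK]; ring
      calc _ ≤ 4 * c * (K * W) := Nat.mul_le_mul_left _ h1
        _ = _ := by rw [Fintype.card_fin]; ring)
    (by
      intro i₀
      refine le_trans (Finset.card_le_card ?_) (hB (θB i₀))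
      intro i hi
      simp only [Finset.mem_filter, Finset.mem_univ, true_and, Prod.mk.injEq] at hi ⊢
      obtain ⟨⟨-, h1⟩, h2, h3⟩ := hi
      have h4 := window_lt _ _ _ (by omega) h2
      rw [hcast] at h1
      -- equal phases at distance less than `T`
      have h5 : T ∣ θB i₀ - θB i := (Nat.modEq_iff_dvd' h3).1 h1
      have h6 := Nat.eq_zero_of_dvd_of_lt h5 (by omega)
      omega)
    M hθB
  refine ⟨PA, fun t => ((t : ZMod T), Q t), hPA, ?_, ?_⟩
  · intro t ht
    obtain ⟨j, hj⟩ := hQ t ht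
    exact ⟨j, by simp [hj]⟩
  · rintro a ⟨ψ, w⟩
    have h := hloadB w (a, ψ)
    refine le_trans (Finset.card_le_card ?_) (h.trans (by omega))
    intro i hi
    simp only [Finset.mem_filter, Finset.mem_univ, true_and, Prod.mk.injEq] at hi ⊢
    tauto

/-! ### The host hypergraph -/

/-- A schedule for a multigraph with edge set `I` (called items) and end maps `p`, `q`: two times
for every item, each taken at most `c` times, such that at every vertex the `2r` times of the
incident items fall into at most `r` groups of diameter at most `2`. A group consists of
first times only (label `gA`) or of second times only (label `gB`). -/
def HasSchedule (r c : ℕ) {V I : Type} [Fintype I] (p q : I → V) : Prop :=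
  ∃ θA θB : I → ℕ, (∀ i, θA i < Fintype.card I) ∧ (∀ i, θB i < Fintype.card I) ∧
    (∀ t, (Finset.univ.filter fun i => θA i = t).card ≤ c) ∧
    (∀ t, (Finset.univ.filter fun i => θB i = t).card ≤ c) ∧
    ∀ v, ∃ gA gB : I → Fin r, ∀ i j, (p i = v ∨ q i = v) → (p j = v ∨ q j = v) →
      gA i ≠ gB j ∧ (gA i = gA j → θA i ≤ θA j + 2) ∧ (gB i = gB j → θB i ≤ θB j + 2)

/-- Labels in `Fin C` that separate points of a common fibre. -/
theorem exists_copy {I Z : Type} [Fintype I] [DecidableEq Z] (h : I → Z) (C : ℕ) (hC : 0 < C)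
    (hfib : ∀ z, (Finset.univ.filter fun i => h i = z).card ≤ C) :
    ∃ k : I → Fin C, Function.Injective fun i => (h i, k i) := by
  classical
  have : ∀ z, ∃ g : I → Fin C, ∀ i j, h i = z → h j = z → g i = g j → i = j := by
    intro z
    have hcard : Fintype.card {i // h i = z} ≤ Fintype.card (Fin C) := by
      rw [Fintype.card_subtype, Fintype.card_fin]; exact hfib z
    obtain ⟨g⟩ := Function.Embedding.nonempty_of_card_le hcard
    refine ⟨fun i => if hi : h i = z then g ⟨i, hi⟩ else ⟨0, hC⟩, fun i j hi hj hij => ?_⟩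
    simpa [hi, hj] using hij
  choose g hg using this
  refine ⟨fun i => g (h i) i, fun i j hij => ?_⟩
  simp only [Prod.mk.injEq] at hij
  exact hg (h i) i j rfl hij.1.symm (by rw [hij.2, hij.1])

/-- Instructions for a walk of at most two steps. -/
abbrev Code : Type := Fin 3 × Fin 20 × Fin 20

/-- The end of the walk from `z` encoded by `w`; the first entry is the number of steps. -/
def shortWalk {X : Type} (F : Fin 20 → X → X) (z : X) (w : Code) : X :=
  if w.1 = 0 then z else if w.1 = 1 then F w.2.1 z else F w.2.2 (F w.2.1 z)

theorem exists_shortWalk {X : Type} (F : Fin 20 → X → X) (P : ℕ → X) (M : ℕ)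
    (hP : ∀ t < M, ∃ j, P (t + 1) = F j (P t)) (s t : ℕ) (hst : s ≤ t) (ht : t ≤ s + 2)
    (hM : t ≤ M) : ∃ w, P t = shortWalk F (P s) w := by
  obtain rfl | rfl | rfl : t = s ∨ t = s + 1 ∨ t = s + 2 := by omega
  · exact ⟨(0, 0, 0), by simp [shortWalk]⟩
  · obtain ⟨j, hj⟩ := hP s (by omega)
    exact ⟨(1, j, 0), by simp [shortWalk, hj]⟩
  · obtain ⟨j, hj⟩ := hP s (by omega)
    obtain ⟨k, hk⟩ := hP (s + 1) (by omega)
    exact ⟨(2, j, k), by simp [shortWalk, hj, hk]⟩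

/-- Positions at times in a group of diameter two are within two steps of the earliest one. -/
theorem exists_root {X I : Type} (F : Fin 20 → X → X) (P : ℕ → X) (M : ℕ)
    (hP : ∀ t < M, ∃ j, P (t + 1) = F j (P t)) (θ : I → ℕ) (hθ : ∀ i, θ i < M)
    (S : Finset I) (hS : S.Nonempty) (h : ∀ i ∈ S, ∀ j ∈ S, θ i ≤ θ j + 2) :
    ∃ x, ∀ i ∈ S, ∃ w, P (θ i) = shortWalk F x w := by
  obtain ⟨i₀, hi₀, hmin⟩ := Finset.exists_min_image S θ hS
  exact ⟨P (θ i₀), fun i hi =>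
    exists_shortWalk F P M hP _ _ (hmin i hi) (h i hi i₀ hi₀) (hθ i).le⟩

/-- For every `n` there is an `r`-uniform hypergraph with `O(n)` vertices and `O(n^(r/2))` edges
that contains the dual of every scheduled multigraph with at most `2n` edges. A host edge is an
`r`-set of vertices whose `2r` coordinates lie within two steps of `r` points. -/
theorem exists_host (r c : ℕ) : ∃ C : ℕ, 0 < C ∧ ∀ n : ℕ, 1 ≤ n →
    ∃ (Y : Type) (_ : Fintype Y) (_ : DecidableEq Y) (EY : Finset (Finset Y)),
      (∀ e ∈ EY, e.card = r) ∧ Fintype.card Y ≤ C * n ∧ EY.card ^ 2 ≤ C * n ^ r ∧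
      ∀ (V I : Type) [Fintype I] [DecidableEq V] (p q : I → V), Fintype.card I ≤ 2 * n →
        HasSchedule r c p q → ∃ ψ : I → Y, Function.Injective ψ ∧
          ∀ v, (Finset.univ.filter fun i => p i = v ∨ q i = v).card = r →
            (Finset.univ.filter fun i => p i = v ∨ q i = v).image ψ ∈ EY := by
  classical
  obtain ⟨C, hC, hcore⟩ := exists_core c
  set L := r ^ r * r ^ r * 1200 ^ r * 1200 ^ r * C ^ r with hL
  refine ⟨8 * C * C + L ^ 2 * (8 * C) ^ r, by positivity, fun n hn => ?_⟩
  obtain ⟨XA, XB, _, _, _, _, FA, FB, hXA, hXB, hplace⟩ := hcore (2 * n) (by omega)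
  let X := XA ⊕ XB
  let F : Fin 20 → X → X := fun j => Sum.map (FA j) (FB j)
  have hX : Fintype.card X ^ 2 ≤ 8 * C * n := by
    have h1 : Fintype.card X = Fintype.card XA + Fintype.card XB := Fintype.card_sum
    rw [h1]
    have := two_mul_le_add_sq (Fintype.card XA) (Fintype.card XB)
    nlinarith
  let Par := (Fin r → X) × (Fin r → Fin r) × (Fin r → Fin r) × (Fin r → Code) ×
    (Fin r → Code) × (Fin r → Fin C)
  let edge : Par → Finset (X × X × Fin C) := fun z => Finset.univ.image fun m =>
    (shortWalk F (z.1 (z.2.1 m)) (z.2.2.2.1 m), shortWalk F (z.1 (z.2.2.1 m)) (z.2.2.2.2.1 m),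
      z.2.2.2.2.2 m)
  refine ⟨X × X × Fin C, inferInstance, inferInstance,
    (Finset.univ.image edge).filter fun e => e.card = r, fun e he => (Finset.mem_filter.1 he).2,
    ?_, ?_, ?_⟩
  · rw [Fintype.card_prod, Fintype.card_prod, Fintype.card_fin, ← mul_assoc, ← sq]
    calc Fintype.card X ^ 2 * C ≤ 8 * C * n * C := Nat.mul_le_mul_right _ hX
      _ = 8 * C * C * n := by ring
      _ ≤ _ := Nat.mul_le_mul_right _ (by omega)
  · have hPar : Fintype.card Par = Fintype.card X ^ r * L := by
      simp only [Par, Fintype.card_prod, Fintype.card_fun, Fintype.card_fin, hL]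
      rw [show 3 * (20 * 20) = 1200 from rfl]
      ring
    have h1 : ((Finset.univ.image edge).filter fun e => e.card = r).card ≤
        Fintype.card X ^ r * L := by
      rw [← hPar]
      exact (Finset.card_filter_le _ _).trans Finset.card_image_le
    calc _ ≤ (Fintype.card X ^ r * L) ^ 2 := Nat.pow_le_pow_left h1 2
      _ = L ^ 2 * (Fintype.card X ^ 2) ^ r := by ring
      _ ≤ L ^ 2 * (8 * C * n) ^ r := by gcongr
      _ = L ^ 2 * (8 * C) ^ r * n ^ r := by rw [mul_pow (8 * C) n]; ring
      _ ≤ _ := Nat.mul_le_mul_right _ (by omega)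
  · intro V I _ _ p q hI ⟨θA, θB, hA, hB, hfA, hfB, hgroup⟩
    obtain ⟨PA, PB, hPA, hPB, hload⟩ := hplace I θA θB (fun i => (hA i).trans_le hI)
      (fun i => (hB i).trans_le hI) hfA hfB
    let QA : ℕ → X := fun t => Sum.inl (PA t)
    let QB : ℕ → X := fun t => Sum.inr (PB t)
    have hQA : ∀ t < 2 * n, ∃ j, QA (t + 1) = F j (QA t) := fun t ht => by
      obtain ⟨j, hj⟩ := hPA t ht
      exact ⟨j, by simp [QA, F, hj]⟩
    have hQB : ∀ t < 2 * n, ∃ j, QB (t + 1) = F j (QB t) := fun t ht => by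
      obtain ⟨j, hj⟩ := hPB t ht
      exact ⟨j, by simp [QB, F, hj]⟩
    obtain ⟨k, hk⟩ := exists_copy (fun i => (PA (θA i), PB (θB i))) C hC fun z => by
      simpa [Prod.ext_iff] using hload z.1 z.2
    have hψ : Function.Injective fun i => (QA (θA i), QB (θB i), k i) := by
      intro i j hij
      apply hk
      simp only [Prod.mk.injEq, QA, QB] at hij
      simp only [Prod.mk.injEq]
      exact ⟨⟨Sum.inl_injective hij.1, Sum.inr_injective hij.2.1⟩, hij.2.2⟩
    refine ⟨_, hψ, fun v hv => ?_⟩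
    set S := Finset.univ.filter fun i => p i = v ∨ q i = v with hS
    obtain ⟨gA, gB, hg⟩ := hgroup v
    have hg' : ∀ i ∈ S, ∀ j ∈ S, gA i ≠ gB j ∧ (gA i = gA j → θA i ≤ θA j + 2) ∧
        (gB i = gB j → θB i ≤ θB j + 2) := fun i hi j hj =>
      hg i j (by simpa [hS] using hi) (by simpa [hS] using hj)
    have hroot : ∀ a : Fin r, ∃ x : X,
        (∀ i ∈ S, gA i = a → ∃ w, QA (θA i) = shortWalk F x w) ∧
        (∀ i ∈ S, gB i = a → ∃ w, QB (θB i) = shortWalk F x w) := by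
      intro a
      by_cases hcase : (S.filter fun i => gA i = a).Nonempty
      · obtain ⟨x, hx⟩ := exists_root F QA (2 * n) hQA θA (fun i => (hA i).trans_le hI) _ hcase
          (fun i hi j hj => by
            rw [Finset.mem_filter] at hi hj
            exact (hg' i hi.1 j hj.1).2.1 (by rw [hi.2, hj.2]))
        refine ⟨x, fun i hi hia => hx i (by simp [hi, hia]), fun i hi hia => ?_⟩
        obtain ⟨j, hj⟩ := hcase
        rw [Finset.mem_filter] at hj
        exact absurd (hj.2.trans hia.symm) (hg' j hj.1 i hi).1
      · have hno : ∀ i ∈ S, gA i ≠ a := fun i hi hia => hcase ⟨i, by simp [hi, hia]⟩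
        by_cases hcase2 : (S.filter fun i => gB i = a).Nonempty
        · obtain ⟨x, hx⟩ := exists_root F QB (2 * n) hQB θB (fun i => (hB i).trans_le hI) _ hcase2
            (fun i hi j hj => by
              rw [Finset.mem_filter] at hi hj
              exact (hg' i hi.1 j hj.1).2.2 (by rw [hi.2, hj.2]))
          exact ⟨x, fun i hi hia => absurd hia (hno i hi), fun i hi hia => hx i (by simp [hi, hia])⟩
        · exact ⟨QA 0, fun i hi hia => absurd hia (hno i hi),
            fun i hi hia => absurd ⟨i, by simp [hi, hia]⟩ hcase2⟩
    choose ρ hρA hρB using hroot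
    have hwA : ∀ i : S, ∃ w, QA (θA i) = shortWalk F (ρ (gA i)) w := fun i => hρA _ i i.2 rfl
    have hwB : ∀ i : S, ∃ w, QB (θB i) = shortWalk F (ρ (gB i)) w := fun i => hρB _ i i.2 rfl
    choose wA hwA using hwA
    choose wB hwB using hwB
    let e : Fin r ≃ S := (S.equivFinOfCardEq hv).symm
    rw [Finset.mem_filter, Finset.card_image_of_injective _ hψ]
    refine ⟨Finset.mem_image.2 ⟨(ρ, fun m => gA (e m), fun m => gB (e m), fun m => wA (e m),
      fun m => wB (e m), fun m => k (e m)), Finset.mem_univ _, ?_⟩, hv⟩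
    ext y
    simp only [edge, Finset.mem_image, Finset.mem_univ, true_and, ← hwA, ← hwB]
    constructor
    · rintro ⟨m, rfl⟩
      exact ⟨e m, (e m).2, rfl⟩
    · rintro ⟨i, hi, rfl⟩
      exact ⟨e.symm ⟨i, hi⟩, by simp⟩

/-! ### Scheduling a graph by breadth-first search -/

section BreadthFirst

variable {I : Type} (S : SimpleGraph I)

theorem exists_parent {x u : I} {k : ℕ} (h : S.Reachable x u) (hk : S.dist x u = k + 1) :
    ∃ w, S.Adj u w ∧ S.Reachable x w ∧ S.dist x w = k := by
  obtain ⟨p, hp⟩ := h.symm.exists_walk_length_eq_dist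
  rw [SimpleGraph.dist_comm, hk] at hp
  cases p with
  | nil => simp at hp
  | @cons _ w _ hw q =>
    simp only [SimpleGraph.Walk.length_cons, add_left_inj] at hp
    have h1 : S.dist w x ≤ k := hp ▸ SimpleGraph.dist_le q
    have h2 : S.dist u x ≤ k + 1 := by
      have := SimpleGraph.dist_le (SimpleGraph.Walk.cons hw q); simp [hp] at this; exact this
    obtain ⟨q', hq'⟩ := (SimpleGraph.Walk.reachable q).exists_walk_length_eq_dist
    have h3 : S.dist u x ≤ S.dist w x + 1 := by
      have := SimpleGraph.dist_le (SimpleGraph.Walk.cons hw q')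
      simpa [hq'] using this
    refine ⟨w, hw, q.reachable.symm, ?_⟩
    rw [SimpleGraph.dist_comm] at hk ⊢
    omega

theorem exists_at_dist {x u : I} (h : S.Reachable x u) (k : ℕ) (hk : k ≤ S.dist x u) :
    ∃ w, S.Reachable x w ∧ S.dist x w = k := by
  obtain ⟨m, hm⟩ := Nat.exists_eq_add_of_le hk
  clear hk
  induction m generalizing u with
  | zero => exact ⟨u, h, by omega⟩
  | succ m ih =>
    obtain ⟨w, -, hw, hd⟩ := exists_parent S h hm
    exact ih hw hd

variable [Fintype I]

/-- A connected component with `m` vertices has degree sum at least `2 (m - 1)`. -/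
theorem two_mul_card_le_sum_degree (x : I) (K : Finset I) (hK : ∀ u, u ∈ K ↔ S.Reachable x u)
    (N : I → Finset I) (hN : ∀ u w, w ∈ N u ↔ S.Adj u w) :
    2 * K.card ≤ (∑ u ∈ K, (N u).card) + 2 := by
  classical
  have hpar : ∀ u, ∃ w, u ∈ K.erase x → S.Adj u w ∧ w ∈ K ∧ S.dist x u = S.dist x w + 1 := by
    intro u
    by_cases hu : u ∈ K.erase x
    · rw [Finset.mem_erase, hK] at hu
      have hd : S.dist x u ≠ 0 := hu.2.dist_eq_zero_iff.not.2 hu.1.symm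
      obtain ⟨k, hk⟩ := Nat.exists_eq_succ_of_ne_zero hd
      obtain ⟨w, h1, h2, h3⟩ := exists_parent S hu.2 hk
      exact ⟨w, fun _ => ⟨h1, (hK w).2 h2, by rw [h3, hk]⟩⟩
    · exact ⟨u, fun h => absurd h hu⟩
  choose π hπ using hpar
  have h1 : (K.erase x ×ˢ (Finset.univ : Finset Bool)).card ≤ (K.sigma fun u => N u).card := by
    apply Finset.card_le_card_of_injOn fun z =>
      if z.2 then (⟨z.1, π z.1⟩ : Σ _ : I, I) else ⟨π z.1, z.1⟩
    · rintro ⟨u, b⟩ hu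
      simp only [Finset.coe_product, Set.mem_prod, Finset.mem_coe] at hu
      obtain ⟨h1, h2, -⟩ := hπ u hu.1
      cases b
      · simp [hN, h1.symm, h2]
      · simp [hN, h1, Finset.mem_of_mem_erase hu.1]
    · rintro ⟨u, b⟩ hu ⟨w, b'⟩ hw huw
      simp only [Finset.coe_product, Set.mem_prod, Finset.mem_coe] at hu hw
      have hu' := (hπ u hu.1).2.2
      have hw' := (hπ w hw.1).2.2
      cases b <;> cases b' <;>
        simp only [if_true, if_false, Bool.false_eq_true, Sigma.mk.injEq, heq_eq_eq] at huw
      · rw [huw.2]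
      · rw [huw.1] at hu'; rw [← huw.2] at hw'; omega
      · rw [huw.2] at hu'; rw [← huw.1] at hw'; omega
      · rw [huw.1]
  have hx : x ∈ K := (hK x).2 (SimpleGraph.Reachable.refl x)
  rw [Finset.card_product, Finset.card_erase_of_mem hx, Finset.card_sigma] at h1
  simp only [Finset.card_univ, Fintype.card_bool] at h1
  omega

/-- Breadth-first levels grow only at vertices of degree exceeding two. -/
theorem card_level_le (ex : I → ℕ)
    (hdeg : ∀ i (s : Finset I), (∀ j ∈ s, S.Adj i j) → s.card ≤ 2 + ex i) (x : I)
    (K : Finset I) (hK : ∀ u, u ∈ K ↔ S.Reachable x u) (k : ℕ) :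
    (K.filter fun u => S.dist x u = k).card ≤ 2 + ∑ u ∈ K.filter (fun u => S.dist x u < k), ex u := by
  classical
  have hx : x ∈ K := (hK x).2 (SimpleGraph.Reachable.refl x)
  have hzero : ∀ u ∈ K, S.dist x u = 0 → u = x := fun u hu h =>
    (((hK u).1 hu).dist_eq_zero_iff.1 h).symm
  have hpar : ∀ k, ∀ u ∈ K, S.dist x u = k + 1 → ∃ w ∈ K, S.dist x w = k ∧ S.Adj w u := by
    intro k u hu h
    obtain ⟨w, h1, h2, h3⟩ := exists_parent S ((hK u).1 hu) h
    exact ⟨w, (hK w).2 h2, h3, h1.symm⟩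
  induction k with
  | zero =>
    have : (K.filter fun u => S.dist x u = 0) ⊆ {x} := fun u hu => by
      rw [Finset.mem_filter] at hu
      rw [Finset.mem_singleton, hzero u hu.1 hu.2]
    have := Finset.card_le_card this
    rw [Finset.card_singleton] at this
    omega
  | succ k ih =>
    have hsplit : ∑ u ∈ K.filter (fun u => S.dist x u < k + 1), ex u =
        ∑ u ∈ K.filter (fun u => S.dist x u < k), ex u +
        ∑ u ∈ K.filter (fun u => S.dist x u = k), ex u := by
      rw [← Finset.sum_union]
      · congr 1
        ext u
        simp only [Finset.mem_filter, Finset.mem_union]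
        rw [← and_or_left, Nat.lt_succ_iff_lt_or_eq]
      · rw [Finset.disjoint_left]
        intro u hu hu'
        rw [Finset.mem_filter] at hu hu'
        omega
    rcases Nat.eq_zero_or_pos k with rfl | hk
    · have h1 : (K.filter fun u => S.dist x u = 0 + 1).card ≤ 2 + ex x := by
        apply hdeg
        intro j hj
        rw [Finset.mem_filter] at hj
        obtain ⟨w, hw, h0, hadj⟩ := hpar 0 j hj.1 hj.2
        rwa [hzero w hw h0] at hadj
      have h2 : ex x ≤ ∑ u ∈ K.filter (fun u => S.dist x u < 0 + 1), ex u :=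
        Finset.single_le_sum (f := ex) (fun _ _ => Nat.zero_le _) (by simp [hx])
      omega
    · obtain ⟨k, rfl⟩ := Nat.exists_eq_add_of_lt hk
      simp only [zero_add] at *
      have h1 : (K.filter fun u => S.dist x u = k + 1 + 1) ⊆
          (K.filter fun u => S.dist x u = k + 1).biUnion fun w =>
            K.filter fun u => S.dist x u = k + 1 + 1 ∧ S.Adj w u := by
        intro u hu
        rw [Finset.mem_filter] at hu
        obtain ⟨w, hw, h0, hadj⟩ := hpar _ u hu.1 hu.2
        exact Finset.mem_biUnion.2 ⟨w, by simp [hw, h0], by simp [hu, hadj]⟩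
      have h2 : ∀ w ∈ K.filter (fun u => S.dist x u = k + 1),
          (K.filter fun u => S.dist x u = k + 1 + 1 ∧ S.Adj w u).card ≤ 1 + ex w := by
        intro w hw
        rw [Finset.mem_filter] at hw
        obtain ⟨v, hv, h0, hadj⟩ := hpar _ w hw.1 hw.2
        -- the parent of `w` uses up one unit of its degree
        have hv' : v ∉ K.filter fun u => S.dist x u = k + 1 + 1 ∧ S.Adj w u := by
          simp only [Finset.mem_filter, not_and]
          omega
        have := hdeg w (insert v (K.filter fun u => S.dist x u = k + 1 + 1 ∧ S.Adj w u)) (by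
          intro j hj
          rcases Finset.mem_insert.1 hj with rfl | hj
          · exact hadj.symm
          · exact (Finset.mem_filter.1 hj).2.2)
        rw [Finset.card_insert_of_notMem hv'] at this
        omega
      have h3 := (Finset.card_le_card h1).trans
        (Finset.card_biUnion_le.trans (Finset.sum_le_sum h2))
      rw [Finset.sum_add_distrib, Finset.sum_const, smul_eq_mul, mul_one] at h3
      omega

/-- A graph whose components are paths and cycles up to a bounded total excess degree has a layout
of bandwidth one in which every position is shared by boundedly many vertices: the components are
laid out one after the other, each in breadth-first order. -/
theorem exists_layout (ex : I → ℕ) (E : ℕ)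
    (hdeg : ∀ i (s : Finset I), (∀ j ∈ s, S.Adj i j) → s.card ≤ 2 + ex i)
    (hex : ∀ x (K : Finset I), (∀ u ∈ K, S.Reachable x u) → ∑ u ∈ K, ex u ≤ E) :
    ∃ θ : I → ℕ, (∀ i, θ i < Fintype.card I) ∧
      (∀ t, (Finset.univ.filter fun i => θ i = t).card ≤ 2 + E) ∧
      ∀ i j, S.Adj i j → θ i ≤ θ j + 1 := by
  classical
  let ρ : I → I := fun i => (S.connectedComponentMk i).out
  have hρ : ∀ i, S.Reachable (ρ i) i := fun i =>
    SimpleGraph.ConnectedComponent.exact (Quot.out_eq (S.connectedComponentMk i))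
  have hρeq : ∀ i j, S.Reachable i j → ρ i = ρ j := fun i j h => by
    simp only [ρ, SimpleGraph.ConnectedComponent.sound h]
  have hρiff : ∀ i j, ρ i = ρ j ↔ S.Reachable (ρ j) i := fun i j =>
    ⟨fun h => h ▸ hρ i, fun h => hρeq _ _ (h.symm.trans (hρ j))⟩
  let e := Fintype.equivFin I
  let base : I → ℕ := fun i => (Finset.univ.filter fun j => e (ρ j) < e (ρ i)).card
  let K : I → Finset I := fun i => Finset.univ.filter fun j => ρ j = ρ i
  have hKmem : ∀ i u, u ∈ K i ↔ S.Reachable (ρ i) u := fun i u => by simp [K, hρiff]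
  have hdist : ∀ i, S.dist (ρ i) i < (K i).card := by
    intro i
    have : Nonempty I := ⟨i⟩
    choose! f hf using exists_at_dist S (hρ i)
    have : (Finset.range (S.dist (ρ i) i + 1)).card ≤ (K i).card := by
      apply Finset.card_le_card_of_injOn f
      · intro k hk
        rw [Finset.mem_coe, Finset.mem_range] at hk
        exact (hKmem _ _).2 (hf k (by omega)).1
      · intro k hk k' hk' hkk'
        rw [Finset.mem_coe, Finset.mem_range] at hk hk'
        rw [← (hf k (by omega)).2, ← (hf k' (by omega)).2, hkk']
    rwa [Finset.card_range] at this
  have hbase : ∀ i (s : Finset I), (∀ j, e (ρ j) ≤ e (ρ i) → j ∈ s) →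
      base i + (K i).card ≤ s.card := by
    intro i s hs
    rw [← Finset.card_union_of_disjoint]
    · apply Finset.card_le_card
      intro j hj
      simp only [Finset.mem_union, Finset.mem_filter, Finset.mem_univ, true_and, K] at hj
      rcases hj with hj | hj
      · exact hs j hj.le
      · exact hs j (by rw [hj])
    · rw [Finset.disjoint_left]
      intro j hj hj'
      simp only [Finset.mem_filter, Finset.mem_univ, true_and, K] at hj hj'
      rw [hj'] at hj
      exact lt_irrefl _ hj
  refine ⟨fun i => base i + S.dist (ρ i) i, ?_, ?_, ?_⟩
  · intro i
    have h1 := hbase i Finset.univ (by simp)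
    have h2 := hdist i
    rw [Finset.card_univ] at h1
    show base i + S.dist (ρ i) i < Fintype.card I
    omega
  · intro t
    rcases (Finset.univ.filter fun i => base i + S.dist (ρ i) i = t).eq_empty_or_nonempty
      with h0 | ⟨i, hi⟩
    · simp [h0]
    rw [Finset.mem_filter] at hi
    have hlt : ∀ j j', e (ρ j) < e (ρ j') →
        base j + S.dist (ρ j) j < base j' + S.dist (ρ j') j' := by
      intro j j' h
      have h1 := hbase j (Finset.univ.filter fun u => e (ρ u) < e (ρ j')) (fun u hu => by
        simp [hu.trans_lt h])
      have h2 := hdist j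
      change _ ≤ base j' at h1
      omega
    have hsub : (Finset.univ.filter fun j => base j + S.dist (ρ j) j = t) ⊆
        (K i).filter fun u => S.dist (ρ i) u = S.dist (ρ i) i := by
      intro j hj
      rw [Finset.mem_filter] at hj
      have hij : ρ j = ρ i := by
        rcases lt_trichotomy (e (ρ j)) (e (ρ i)) with h | h | h
        · have := hlt _ _ h; omega
        · exact e.injective h
        · have := hlt _ _ h; omega
      have hb : base j = base i := by simp only [base, hij]
      rw [Finset.mem_filter]
      refine ⟨by simp [K, hij], ?_⟩
      have := hj.2
      rw [hij] at this
      omega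
    refine (Finset.card_le_card hsub).trans
      ((card_level_le S ex hdeg (ρ i) (K i) (hKmem i) _).trans ?_)
    have := hex (ρ i) ((K i).filter fun u => S.dist (ρ i) u < S.dist (ρ i) i) fun u hu =>
      (hKmem i u).1 (Finset.mem_filter.1 hu).1
    omega
  · intro i j hij
    have h1 : ρ i = ρ j := hρeq i j hij.reachable
    have h2 : base i = base j := by simp only [base, h1]
    obtain ⟨p, hp⟩ := (hρ j).exists_walk_length_eq_dist
    have h3 := SimpleGraph.dist_le (p.concat hij.symm)
    rw [SimpleGraph.Walk.length_concat, hp] at h3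
    simp only [h2, h1]
    omega

end BreadthFirst

/-! ### From numbered items to a schedule -/

section Pairing

variable {V I : Type}

/-- The items at each vertex are numbered; items numbered `2 k` and `2 k + 1` at a common vertex are
linked. -/
def pairGraph (p q : I → V) (pos : V → I → ℕ) : SimpleGraph I where
  Adj i j := i ≠ j ∧ ∃ v, (p i = v ∨ q i = v) ∧ (p j = v ∨ q j = v) ∧ pos v i / 2 = pos v j / 2
  symm := ⟨fun _ _ ⟨h, v, hi, hj, h'⟩ => ⟨h.symm, v, hj, hi, h'.symm⟩⟩
  loopless := ⟨fun _ h => h.1 rfl⟩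

/-- `pairGraph` together with a link between the first and the last item at every token. -/
def tokenGraph (r : ℕ) (p q : I → V) (pos : V → I → ℕ) (T : V → Prop) : SimpleGraph I where
  Adj i j := i ≠ j ∧ ∃ v, (p i = v ∨ q i = v) ∧ (p j = v ∨ q j = v) ∧
    (pos v i / 2 = pos v j / 2 ∨ T v ∧ (pos v i = 0 ∧ pos v j = r - 1 ∨
      pos v i = r - 1 ∧ pos v j = 0))
  symm := ⟨fun _ _ ⟨h, v, hi, hj, h'⟩ => ⟨h.symm, v, hj, hi, by
    rcases h' with h | ⟨h, h' | h'⟩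
    · exact Or.inl h.symm
    · exact Or.inr ⟨h, Or.inr ⟨h'.2, h'.1⟩⟩
    · exact Or.inr ⟨h, Or.inl ⟨h'.2, h'.1⟩⟩⟩⟩
  loopless := ⟨fun _ h => h.1 rfl⟩

variable [Fintype V] [Fintype I] [DecidableEq V] [DecidableEq I]

/-- An item with at most `f v` neighbours through each end `v` has at most `f (p i) + f (q i)`
neighbours. -/
theorem card_le_of_ends {p q : I → V} {i : I} (s : Finset I) (R : V → I → Prop) (f : V → ℕ)
    (hs : ∀ j ∈ s, ∃ v, (p i = v ∨ q i = v) ∧ R v j)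
    (hf : ∀ v, (p i = v ∨ q i = v) → ∀ t : Finset I, (∀ j ∈ t, R v j) → t.card ≤ f v) :
    s.card ≤ f (p i) + f (q i) := by
  classical
  have h : s ⊆ (s.filter fun j => R (p i) j) ∪ s.filter fun j => R (q i) j := by
    intro j hj
    obtain ⟨v, rfl | rfl, h⟩ := hs j hj
    · simp [hj, h]
    · simp [hj, h]
  refine (Finset.card_le_card h).trans ((Finset.card_union_le _ _).trans (Nat.add_le_add ?_ ?_))
  · exact hf _ (Or.inl rfl) _ fun j hj => (Finset.mem_filter.1 hj).2
  · exact hf _ (Or.inr rfl) _ fun j hj => (Finset.mem_filter.1 hj).2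

/-- Since the numbering at `v` is injective, an item has at most one partner through `v`. -/
theorem card_partners_le {p q : I → V} {pos : V → I → ℕ}
    (hinj : ∀ v i j, (p i = v ∨ q i = v) → (p j = v ∨ q j = v) → pos v i = pos v j → i = j)
    {v : V} {i : I} (hi : p i = v ∨ q i = v) (t : Finset I)
    (ht : ∀ j ∈ t, i ≠ j ∧ (p j = v ∨ q j = v) ∧ pos v i / 2 = pos v j / 2) : t.card ≤ 1 := by
  refine Finset.card_le_one.2 fun j hj j' hj' => ?_
  obtain ⟨h1, h2, h3⟩ := ht j hj
  obtain ⟨h1', h2', h3'⟩ := ht j' hj'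
  apply hinj v j j' h2 h2'
  have h4 : pos v i ≠ pos v j := fun h => h1 (hinj v i j hi h2 h)
  have h5 : pos v i ≠ pos v j' := fun h => h1' (hinj v i j' hi h2' h)
  omega

/-- For even `r`, a layout of the pairing graph serves as both times; the pairs at a vertex make
`r / 2` groups in each coordinate. -/
theorem hasSchedule_of_even (r : ℕ) (hr : 2 ≤ r) (he : Even r) (p q : I → V)
    (pos : V → I → ℕ) (hlt : ∀ v i, (p i = v ∨ q i = v) → pos v i < r)
    (hinj : ∀ v i j, (p i = v ∨ q i = v) → (p j = v ∨ q j = v) → pos v i = pos v j → i = j) :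
    HasSchedule r 2 p q := by
  obtain ⟨h, hh⟩ := he
  obtain ⟨θ, h1, h2, h3⟩ := exists_layout (pairGraph p q pos) (fun _ => 0) 0
    (fun i s hs => card_le_of_ends (i := i) (p := p) (q := q) s
      (fun v j => i ≠ j ∧ (p j = v ∨ q j = v) ∧ pos v i / 2 = pos v j / 2) (fun _ => 1)
      (fun j hj => by
        obtain ⟨ha, v, hb, hc, hd⟩ := hs j hj
        exact ⟨v, hb, ha, hc, hd⟩)
      (fun v hv t ht => card_partners_le hinj hv t ht)) (by simp)
  have h4 : ∀ v i j, (p i = v ∨ q i = v) → (p j = v ∨ q j = v) → pos v i / 2 = pos v j / 2 →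
      θ i ≤ θ j + 2 := by
    intro v i j hi hj hij
    by_cases hne : i = j
    · rw [hne]; omega
    · have := h3 i j ⟨hne, v, hi, hj, hij⟩
      omega
  refine ⟨θ, θ, h1, h1, h2, h2, fun v => ?_⟩
  refine ⟨fun i => ⟨pos v i / 2 % h, (Nat.mod_lt _ (by omega)).trans (by omega)⟩,
    fun i => ⟨h + pos v i / 2 % h, by have := Nat.mod_lt (pos v i / 2) (show 0 < h by omega); omega⟩,
    fun i j hi hj => ?_⟩
  have hi' := hlt v i hi
  have hj' := hlt v j hj
  have e1 : pos v i / 2 % h = pos v i / 2 := Nat.mod_eq_of_lt (by omega)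
  have e2 : pos v j / 2 % h = pos v j / 2 := Nat.mod_eq_of_lt (by omega)
  simp only [e1, e2, Fin.mk.injEq, ne_eq]
  refine ⟨by omega, fun hij => h4 v i j hi hj hij, fun hij => h4 v i j hi hj (by omega)⟩

/-- A schedule for odd `r` from suitable numberings of the items at each vertex. The item numbered
`r - 1` has no partner. Outside the set `T` of tokens it belongs to the matching `M`, and is moved
next to the item numbered `0` at its `p`-end in the first coordinate and at its `q`-end in the
second. At tokens it is linked to the item numbered `0` in the first coordinate. The sets `Q x` are
disjoint unions of components of the pairing graph that contain the first items, but not the last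
items, of tokens; this bounds the excess degree in the components of `tokenGraph`. -/
theorem hasSchedule_of_odd (r : ℕ) (hr : 3 ≤ r) (ho : Odd r) (p q : I → V) (hpq : ∀ i, p i ≠ q i)
    (pos : V → I → ℕ) (hlt : ∀ v i, (p i = v ∨ q i = v) → pos v i < r)
    (hinj : ∀ v i j, (p i = v ∨ q i = v) → (p j = v ∨ q j = v) → pos v i = pos v j → i = j)
    (hsurj : ∀ v m, m < r → ∃ i, (p i = v ∨ q i = v) ∧ pos v i = m)
    (T : V → Prop) (M : Finset I) (Q : V → Finset I)
    (hM : ∀ v i, (p i = v ∨ q i = v) → (i ∈ M ↔ ¬ T v ∧ pos v i = r - 1))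
    (hQ : ∀ v i j, (p i = v ∨ q i = v) → (p j = v ∨ q j = v) → pos v i / 2 = pos v j / 2 →
      ∀ x, T x → i ∈ Q x → j ∈ Q x)
    (hdisj : ∀ x y i, T x → T y → i ∈ Q x → i ∈ Q y → x = y)
    (hfirst : ∀ x i, T x → (p i = x ∨ q i = x) → pos x i = 0 → i ∈ Q x)
    (hlast : ∀ x i, T x → (p i = x ∨ q i = x) → pos x i = r - 1 → ∀ y, T y → i ∉ Q y) :
    HasSchedule r 12 p q := by
  classical
  obtain ⟨h, hh⟩ := ho
  let H := pairGraph p q pos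
  let S := tokenGraph r p q pos T
  choose a ha ha0 using fun v => hsurj v 0 (by omega)
  choose z hz hz1 using fun v => hsurj v (r - 1) (by omega)
  -- the layout for the second coordinate
  have hHdeg : ∀ i (s : Finset I), (∀ j ∈ s, H.Adj i j) →
      s.card + (Finset.univ.filter fun x => T x ∧ z x = i).card ≤ 2 := by
    intro i s hs
    have h1 := card_le_of_ends (i := i) (p := p) (q := q) s
      (fun v j => i ≠ j ∧ (p j = v ∨ q j = v) ∧ pos v i / 2 = pos v j / 2)
      (fun v => if T v ∧ z v = i then 0 else 1)
      (fun j hj => by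
        obtain ⟨ha, v, hb, hc, hd⟩ := hs j hj
        exact ⟨v, hb, ha, hc, hd⟩)
      (fun v hv t ht => by
        split_ifs with hc
        · rw [Nat.le_zero, Finset.card_eq_zero, Finset.eq_empty_iff_forall_notMem]
          intro j hj
          obtain ⟨h1, h2, h3⟩ := ht j hj
          have h4 := hz1 v
          rw [hc.2] at h4
          have h5 := hlt v j h2
          exact h1 (hinj v i j hv h2 (by omega))
        · exact card_partners_le hinj hv t ht)
    have h2 : (Finset.univ.filter fun x => T x ∧ z x = i) ⊆
        ({p i} : Finset V).filter (fun x => T x ∧ z x = i) ∪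
          ({q i} : Finset V).filter (fun x => T x ∧ z x = i) := by
      intro x hx
      rw [Finset.mem_filter] at hx
      have := hz x
      rw [hx.2.2] at this
      simp only [Finset.mem_union, Finset.mem_filter, Finset.mem_singleton]
      rcases this with h | h
      · exact Or.inl ⟨h.symm, hx.2⟩
      · exact Or.inr ⟨h.symm, hx.2⟩
    have h3 := (Finset.card_le_card h2).trans (Finset.card_union_le _ _)
    simp only [Finset.filter_singleton] at h3
    split_ifs at h1 h3 <;> simp only [Finset.card_singleton, Finset.card_empty] at h3 <;> omega
  obtain ⟨θB, hB1, hB2, hB3⟩ := exists_layout H (fun _ => 0) 0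
    (fun i s hs => by have := hHdeg i s hs; omega) (by simp)
  -- the layout for the first coordinate
  let ex : I → ℕ := fun i => (Finset.univ.filter fun x => T x ∧ a x = i).card
  have hSdeg : ∀ i (s : Finset I), (∀ j ∈ s, S.Adj i j) → s.card ≤ 2 + ex i := by
    intro i s hs
    have h1 := card_le_of_ends (i := i) (p := p) (q := q) s
      (fun v j => i ≠ j ∧ (p j = v ∨ q j = v) ∧
        (pos v i / 2 = pos v j / 2 ∨ T v ∧ (pos v i = 0 ∧ pos v j = r - 1 ∨
          pos v i = r - 1 ∧ pos v j = 0)))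
      (fun v => if T v ∧ a v = i then 2 else 1)
      (fun j hj => by
        obtain ⟨ha, v, hb, hc, hd⟩ := hs j hj
        exact ⟨v, hb, ha, hc, hd⟩)
      (fun v hv t ht => by
        split_ifs with hc
        · have h1 : t ⊆ insert (z v) (t.erase (z v)) := Finset.insert_erase_subset _ _
          have h2 : (t.erase (z v)).card ≤ 1 := by
            apply card_partners_le hinj hv
            intro j hj
            rw [Finset.mem_erase] at hj
            obtain ⟨k1, k2, k3⟩ := ht j hj.2
            refine ⟨k1, k2, ?_⟩
            rcases k3 with k3 | ⟨-, k3 | k3⟩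
            · exact k3
            · exact absurd (hinj v j (z v) k2 (hz v) (by rw [hz1, k3.2])) hj.1
            · have := ha0 v
              rw [hc.2] at this
              omega
          have h3 := (Finset.card_le_card h1).trans (Finset.card_insert_le _ _)
          omega
        · by_cases hT : T v ∧ pos v i = r - 1
          · refine Finset.card_le_one.2 fun j hj j' hj' => ?_
            have key : ∀ j ∈ t, pos v j = 0 := by
              intro j hj
              obtain ⟨k1, k2, k3⟩ := ht j hj
              have := hlt v j k2
              have k4 : pos v i ≠ pos v j := fun h => k1 (hinj v i j hv k2 h)
              omega
            exact hinj v j j' (ht j hj).2.1 (ht j' hj').2.1 (by rw [key j hj, key j' hj'])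
          · apply card_partners_le hinj hv
            intro j hj
            obtain ⟨k1, k2, k3⟩ := ht j hj
            refine ⟨k1, k2, ?_⟩
            rcases k3 with k3 | ⟨k, k3 | k3⟩
            · exact k3
            · exact absurd ⟨k, hinj v (a v) i (ha v) hv (by rw [ha0, k3.1])⟩ hc
            · exact absurd ⟨k, k3.1⟩ hT)
    have h2 : ({p i} : Finset V).filter (fun x => T x ∧ a x = i) ∪
          ({q i} : Finset V).filter (fun x => T x ∧ a x = i) ⊆
        (Finset.univ.filter fun x => T x ∧ a x = i) := by
      intro x hx
      simp only [Finset.mem_union, Finset.mem_filter] at hx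
      simp only [Finset.mem_filter, Finset.mem_univ, true_and]
      tauto
    have h3 := Finset.card_le_card h2
    rw [Finset.card_union_of_disjoint] at h3
    · simp only [Finset.filter_singleton] at h3
      change _ ≤ ex i at h3
      split_ifs at h1 h3 <;> simp only [Finset.card_singleton, Finset.card_empty] at h3 <;> omega
    · rw [Finset.disjoint_left]
      intro x hx hx'
      rw [Finset.mem_filter, Finset.mem_singleton] at hx hx'
      exact hpq i (hx.1.symm.trans hx'.1)
  -- `lam` collapses each `Q x` to the `H`-component of the last item at `x` and sends other items
  -- to their own `H`-component; it is constant on the components of `S`, since the link at `x` leads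
  -- from `Q x` to the last item at `x`, which is in no `Q y`
  let lam : I → H.ConnectedComponent := fun i =>
    if hi : ∃ x, T x ∧ i ∈ Q x then H.connectedComponentMk (z hi.choose)
    else H.connectedComponentMk i
  have hlamQ : ∀ x i, T x → i ∈ Q x → lam i = H.connectedComponentMk (z x) := by
    intro x i hx hi
    have hex : ∃ x, T x ∧ i ∈ Q x := ⟨x, hx, hi⟩
    simp only [lam, dif_pos hex]
    rw [hdisj _ x i hex.choose_spec.1 hx hex.choose_spec.2 hi]
  have hlamn : ∀ i, (∀ x, T x → i ∉ Q x) → lam i = H.connectedComponentMk i := by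
    intro i hi
    have : ¬ ∃ x, T x ∧ i ∈ Q x := fun ⟨x, h1, h2⟩ => hi x h1 h2
    simp only [lam, dif_neg this]
  have hlamtok : ∀ x i j, T x → (p i = x ∨ q i = x) → (p j = x ∨ q j = x) → pos x i = 0 →
      pos x j = r - 1 → lam i = lam j := by
    intro x i j hx hi hj h0 h1
    rw [hlamQ x i hx (hfirst x i hx hi h0), hlamn j (hlast x j hx hj h1),
      hinj x j (z x) hj (hz x) (by rw [h1, hz1])]
  have hlamadj : ∀ i j, S.Adj i j → lam i = lam j := by
    rintro i j ⟨hij, v, hi, hj, h | ⟨hT, h | h⟩⟩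
    · by_cases hex : ∃ x, T x ∧ i ∈ Q x
      · obtain ⟨x, hx, hix⟩ := hex
        rw [hlamQ x i hx hix, hlamQ x j hx (hQ v i j hi hj h x hx hix)]
      · rw [hlamn i fun x hx hix => hex ⟨x, hx, hix⟩,
          hlamn j fun x hx hjx => hex ⟨x, hx, hQ v j i hj hi h.symm x hx hjx⟩]
        exact SimpleGraph.ConnectedComponent.sound
          (SimpleGraph.Adj.reachable (G := H) ⟨hij, v, hi, hj, h⟩)
    · exact hlamtok v i j hT hi hj h.1 h.2
    · exact (hlamtok v j i hT hj hi h.2 h.1).symm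
  have hlamreach : ∀ i j, S.Reachable i j → lam i = lam j := by
    rintro i j ⟨w⟩
    induction w with
    | nil => rfl
    | cons hadj _ ih => exact (hlamadj _ _ hadj).trans ih
  -- the last item of a token lacks a partner at that token, and a component of `H` with `m` items has
  -- degree sum between `2 * (m - 1)` and `2 * m`, so it contains the last items of at most two tokens
  have htok2 : ∀ i₀, (Finset.univ.filter fun x => T x ∧ H.Reachable i₀ (z x)).card ≤ 2 := by
    intro i₀
    let K : Finset I := Finset.univ.filter fun u => H.Reachable i₀ u
    have h1 := two_mul_card_le_sum_degree H i₀ K (by simp [K])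
      (fun u => Finset.univ.filter fun w => H.Adj u w) (by simp)
    have h2 : ∑ u ∈ K, ((Finset.univ.filter fun w => H.Adj u w).card +
        (Finset.univ.filter fun x => T x ∧ z x = u).card) ≤ ∑ u ∈ K, 2 :=
      Finset.sum_le_sum fun u _ => hHdeg u _ (by simp)
    rw [Finset.sum_add_distrib, Finset.sum_const, smul_eq_mul] at h2
    have h3 : (Finset.univ.filter fun x => T x ∧ H.Reachable i₀ (z x)) ⊆
        K.biUnion fun u => Finset.univ.filter fun x => T x ∧ z x = u := by
      intro x hx
      rw [Finset.mem_filter] at hx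
      simp only [Finset.mem_biUnion, Finset.mem_filter, Finset.mem_univ, true_and, K]
      exact ⟨z x, hx.2.2, hx.2.1, rfl⟩
    have h4 := (Finset.card_le_card h3).trans Finset.card_biUnion_le
    omega
  have hSex : ∀ x (K : Finset I), (∀ u ∈ K, S.Reachable x u) → ∑ u ∈ K, ex u ≤ 2 := by
    intro x₀ K hK
    rw [← Finset.card_biUnion]
    · rcases (K.biUnion fun u => Finset.univ.filter fun x => T x ∧ a x = u).eq_empty_or_nonempty
        with h0 | ⟨x₁, hx₁⟩
      · rw [h0]; simp
      have hmem : ∀ x ∈ K.biUnion (fun u => Finset.univ.filter fun x => T x ∧ a x = u),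
          T x ∧ S.Reachable x₀ (a x) := by
        intro x hx
        rw [Finset.mem_biUnion] at hx
        obtain ⟨u, hu, hx⟩ := hx
        rw [Finset.mem_filter] at hx
        exact ⟨hx.2.1, hx.2.2 ▸ hK u hu⟩
      refine le_trans (Finset.card_le_card fun x hx => ?_) (htok2 (z x₁))
      obtain ⟨h1, h2⟩ := hmem x hx
      obtain ⟨h3, h4⟩ := hmem x₁ hx₁
      rw [Finset.mem_filter]
      refine ⟨Finset.mem_univ _, h1, SimpleGraph.ConnectedComponent.exact ?_⟩
      rw [← hlamQ x (a x) h1 (hfirst x _ h1 (ha x) (ha0 x)),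
        ← hlamQ x₁ (a x₁) h3 (hfirst x₁ _ h3 (ha x₁) (ha0 x₁))]
      exact hlamreach _ _ (h4.symm.trans h2)
    · intro u _ w _ huw
      rw [Function.onFun, Finset.disjoint_left]
      intro x hx hx'
      rw [Finset.mem_filter] at hx hx'
      exact huw (hx.2.2.symm.trans hx'.2.2)
  obtain ⟨θA, hA1, hA2, hA3⟩ := exists_layout S ex 2 hSdeg hSex
  -- the items of `M` are moved next to the first item at one of their ends
  have hfib : ∀ (θ : I → ℕ) (o : I → V), (∀ i, p i = o i ∨ q i = o i) →
      (∀ t, (Finset.univ.filter fun i => θ i = t).card ≤ 4) →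
      ∀ t, (Finset.univ.filter fun i => (if i ∈ M then θ (a (o i)) else θ i) = t).card ≤ 12 := by
    intro θ o ho hθ t
    have h1 : (Finset.univ.filter fun i => (if i ∈ M then θ (a (o i)) else θ i) = t) ⊆
        (Finset.univ.filter fun i => θ i = t).biUnion fun i => {i, z (p i), z (q i)} := by
      intro i hi
      rw [Finset.mem_filter] at hi
      rw [Finset.mem_biUnion]
      by_cases hiM : i ∈ M
      · refine ⟨a (o i), by simpa [hiM] using hi.2, ?_⟩
        have h2 := ((hM (o i) i (ho i)).1 hiM).2
        have h3 : i = z (o i) := hinj (o i) _ _ (ho i) (hz _) (by rw [h2, hz1])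
        simp only [Finset.mem_insert, Finset.mem_singleton]
        rcases ha (o i) with h | h
        · right; left; rw [h]; exact h3
        · right; right; rw [h]; exact h3
      · exact ⟨i, by simpa [hiM] using hi.2, by simp⟩
    refine (Finset.card_le_card h1).trans (Finset.card_biUnion_le.trans
      ((Finset.sum_le_card_nsmul _ _ 3 fun i _ => Finset.card_le_three).trans ?_))
    have := hθ t
    rw [smul_eq_mul]
    omega
  have hTM : ∀ v i, (p i = v ∨ q i = v) → T v → i ∉ M := fun v i hi hT hiM =>
    ((hM v i hi).1 hiM).1 hT
  have hlM : ∀ v i, (p i = v ∨ q i = v) → pos v i ≠ r - 1 → i ∉ M := fun v i hi h hiM =>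
    h ((hM v i hi).1 hiM).2
  refine ⟨fun i => if i ∈ M then θA (a (p i)) else θA i,
    fun i => if i ∈ M then θB (a (q i)) else θB i, ?_, ?_, hfib θA p (fun _ => Or.inl rfl) hA2,
    hfib θB q (fun _ => Or.inr rfl) (fun t => (hB2 t).trans (by omega)), fun v => ?_⟩
  · intro i
    dsimp only
    split_ifs <;> exact hA1 _
  · intro i
    dsimp only
    split_ifs <;> exact hB1 _
  -- the last item at `v` joins the first coordinate when `v` is a token or its `p`-end
  let τ : Prop := T v ∨ p (z v) = v
  have hcl : ∀ i j, (p i = v ∨ q i = v) → (p j = v ∨ q j = v) → pos v i / 2 = pos v j / 2 →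
      θA i ≤ θA j + 1 ∧ θB i ≤ θB j + 1 := by
    intro i j hi hj hij
    by_cases hne : i = j
    · rw [hne]; omega
    · exact ⟨hA3 i j ⟨hne, v, hi, hj, Or.inl hij⟩, hB3 i j ⟨hne, v, hi, hj, hij⟩⟩
  -- agreement of the modified schedules with the last item
  have hzA : τ → ∀ θ : I → ℕ, (θ = fun i => if i ∈ M then θA (a (p i)) else θA i) →
      θ (z v) ≤ θA (a v) + 1 ∧ θA (a v) ≤ θ (z v) + 1 := by
    rintro hτ θ rfl
    dsimp only
    by_cases hT : T v
    · rw [if_neg (hTM v _ (hz v) hT)]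
      have hne : a v ≠ z v := fun h => by
        have h1 := ha0 v
        rw [h, hz1] at h1
        omega
      have hadj : S.Adj (a v) (z v) :=
        ⟨hne, v, ha v, hz v, Or.inr ⟨hT, Or.inl ⟨ha0 v, hz1 v⟩⟩⟩
      exact ⟨hA3 _ _ hadj.symm, hA3 _ _ hadj⟩
    · rw [if_pos ((hM v _ (hz v)).2 ⟨hT, hz1 v⟩), hτ.resolve_left hT]
      omega
  have hzB : ¬ τ → ∀ θ : I → ℕ, (θ = fun i => if i ∈ M then θB (a (q i)) else θB i) →
      θ (z v) = θB (a v) := by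
    rintro hτ θ rfl
    have h1 : ¬ T v := fun h => hτ (Or.inl h)
    have h2 : q (z v) = v := (hz v).resolve_left fun h => hτ (Or.inr h)
    dsimp only
    rw [if_pos ((hM v _ (hz v)).2 ⟨h1, hz1 v⟩), h2]
  generalize hθA' : (fun i => if i ∈ M then θA (a (p i)) else θA i) = θA' at hzA
  generalize hθB' : (fun i => if i ∈ M then θB (a (q i)) else θB i) = θB' at hzB
  have hnl : ∀ i, (p i = v ∨ q i = v) → pos v i ≠ r - 1 → θA' i = θA i ∧ θB' i = θB i := by
    intro i hi h
    have := hlM v i hi h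
    subst hθA' hθB'
    simp [this]
  have hl : ∀ i, (p i = v ∨ q i = v) → pos v i = r - 1 → i = z v := fun i hi h =>
    hinj v _ _ hi (hz v) (by rw [h, hz1])
  refine ⟨fun i => if pos v i = r - 1 then (if τ then ⟨0, by omega⟩ else ⟨r - 1, by omega⟩)
      else ⟨pos v i / 2 % h, (Nat.mod_lt _ (by omega)).trans (by omega)⟩,
    fun i => if pos v i = r - 1 then (if τ then ⟨r - 1, by omega⟩ else ⟨h, by omega⟩)
      else ⟨h + pos v i / 2 % h, by
        have := Nat.mod_lt (pos v i / 2) (show 0 < h by omega); omega⟩, fun i j hi hj => ?_⟩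
  have hi' := hlt v i hi
  have hj' := hlt v j hj
  dsimp only
  have c0 := ha0 v
  by_cases ci : pos v i = r - 1 <;> by_cases cj : pos v j = r - 1
  · rw [hl i hi ci, hl j hj cj]
    simp only [hz1, if_true]
    split_ifs <;> simp only [ne_eq, Fin.mk.injEq] <;> omega
  · obtain ⟨ej1, ej2⟩ := hnl j hj cj
    have e2 : pos v j / 2 % h = pos v j / 2 := Nat.mod_eq_of_lt (by omega)
    rw [if_pos ci, if_neg cj, if_pos ci, if_neg cj, ej1, ej2, hl i hi ci]
    split_ifs with hτ <;> simp only [ne_eq, Fin.mk.injEq, e2]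
    · refine ⟨by omega, fun hij => ?_, by omega⟩
      have h1 := (hzA hτ _ rfl).1
      have h2 := (hcl (a v) j (ha v) hj (by omega)).1
      omega
    · refine ⟨by omega, by omega, fun hij => ?_⟩
      have h1 := hzB hτ _ rfl
      have h2 := (hcl (a v) j (ha v) hj (by omega)).2
      omega
  · obtain ⟨ei1, ei2⟩ := hnl i hi ci
    have e1 : pos v i / 2 % h = pos v i / 2 := Nat.mod_eq_of_lt (by omega)
    rw [if_neg ci, if_pos cj, if_neg ci, if_pos cj, ei1, ei2, hl j hj cj]
    split_ifs with hτ <;> simp only [ne_eq, Fin.mk.injEq, e1]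
    · refine ⟨by omega, fun hij => ?_, by omega⟩
      have h1 := (hzA hτ _ rfl).2
      have h2 := (hcl i (a v) hi (ha v) (by omega)).1
      omega
    · refine ⟨by omega, by omega, fun hij => ?_⟩
      have h1 := hzB hτ _ rfl
      have h2 := (hcl i (a v) hi (ha v) (by omega)).2
      omega
  · obtain ⟨ei1, ei2⟩ := hnl i hi ci
    obtain ⟨ej1, ej2⟩ := hnl j hj cj
    have e1 : pos v i / 2 % h = pos v i / 2 := Nat.mod_eq_of_lt (by omega)
    have e2 : pos v j / 2 % h = pos v j / 2 := Nat.mod_eq_of_lt (by omega)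
    simp only [if_neg ci, if_neg cj, ei1, ei2, ej1, ej2, e1, e2, ne_eq, Fin.mk.injEq]
    refine ⟨by omega, fun hij => ?_, fun hij => ?_⟩
    · have := (hcl i j hi hj hij).1; omega
    · have := (hcl i j hi hj (by omega)).2; omega

end Pairing

/-! ### Matchings covering a prescribed set of vertices -/

section Tutte

/-- A form of Tutte's theorem in which the vertices of `Z` need not be matched. If, for every `S`,
at most `|S|` disjoint odd sets avoid `S ∪ Z` and send all their outgoing edges to `S`, then some
matching (the relation `R`) covers the complement of `Z`. This is Tutte's theorem for the graph
obtained by turning `Z` into a clique, with one more vertex attached to it if the order is odd: at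
most one component meets the clique, and parity absorbs it. -/
theorem exists_matching_off {W : Type} [Fintype W] [DecidableEq W] (G : SimpleGraph W)
    (Z : Finset W)
    (h : ∀ (S : Finset W) (ι : Type) [Fintype ι] (C : ι → Finset W),
      (∀ c c' w, w ∈ C c → w ∈ C c' → c = c') → (∀ c, Odd (C c).card) →
      (∀ c, ∀ w ∈ C c, w ∉ Z ∧ w ∉ S) →
      (∀ c, ∀ w ∈ C c, ∀ w', G.Adj w w' → w' ∈ C c ∨ w' ∈ S) → Fintype.card ι ≤ S.card) :
    ∃ R : W → W → Prop, (∀ a b, R a b → R b a ∧ G.Adj a b) ∧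
      (∀ a b c, R a b → R a c → b = c) ∧ ∀ a, a ∉ Z → ∃ b, R a b := by
  classical
  let U := W ⊕ Fin (Fintype.card W % 2)
  let K : U → Prop := Sum.elim (fun w => w ∈ Z) (fun _ => True)
  let G' : SimpleGraph U :=
    { Adj := fun x y => x ≠ y ∧
        ((∃ a b, x = Sum.inl a ∧ y = Sum.inl b ∧ G.Adj a b) ∨ (K x ∧ K y))
      symm := ⟨by
        rintro x y ⟨h1, ⟨a, b, h2, h3, h4⟩ | h2⟩
        · exact ⟨h1.symm, Or.inl ⟨b, a, h3, h2, h4.symm⟩⟩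
        · exact ⟨h1.symm, Or.inr ⟨h2.2, h2.1⟩⟩⟩
      loopless := ⟨fun x hx => hx.1 rfl⟩ }
  have htutte : ∃ P : G'.Subgraph, P.IsPerfectMatching := by
    rw [SimpleGraph.tutte]
    intro u hu
    rw [SimpleGraph.IsTutteViolator] at hu
    let D := (⊤ : G'.Subgraph).deleteVerts u
    have hD : ∀ x, x ∈ D.verts ↔ x ∉ u := fun x => by
      simp [D]
    have hDadj : ∀ x y, x ∉ u → y ∉ u → G'.Adj x y → D.Adj x y := fun x y hx hy hxy => by
      rw [SimpleGraph.Subgraph.deleteVerts_adj]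
      simp [hx, hy, hxy]
    have hcard : u.ncard + Nat.card D.verts = Fintype.card W + Fintype.card W % 2 := by
      have h1 : D.verts = uᶜ := by ext x; simp [hD]
      rw [Nat.card_coe_set_eq, h1, Set.ncard_add_ncard_compl, Nat.card_eq_fintype_card,
        Fintype.card_sum, Fintype.card_fin]
    have hpar := SimpleGraph.odd_ncard_oddComponents D.coe
    let O := D.coe.oddComponents
    change u.ncard < O.ncard at hu
    change Odd O.ncard ↔ _ at hpar
    have hO2 : u.ncard + 2 ≤ O.ncard := by
      rw [Nat.odd_iff, Nat.odd_iff] at hpar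
      omega
    -- all components but at most one avoid the clique
    let B : Set D.coe.ConnectedComponent :=
      {c | ∃ x : D.verts, K x.1 ∧ D.coe.connectedComponentMk x = c}
    have hB : B.ncard ≤ 1 := by
      rw [Set.ncard_le_one (Set.toFinite _)]
      rintro _ ⟨x, hx, rfl⟩ _ ⟨y, hy, rfl⟩
      by_cases hxy : x = y
      · rw [hxy]
      · apply SimpleGraph.ConnectedComponent.sound
        apply SimpleGraph.Adj.reachable
        apply hDadj _ _ ((hD _).1 x.2) ((hD _).1 y.2)
        exact ⟨fun h => hxy (Subtype.ext h), Or.inr ⟨hx, hy⟩⟩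
    have hOB : u.ncard + 1 ≤ (O \ B).ncard := by
      have := Set.ncard_le_ncard_sdiff_add_ncard O B
      omega
    let S : Finset W := Finset.univ.filter fun w => (Sum.inl w : U) ∈ u
    have hS : S.card ≤ u.ncard := by
      rw [← Set.ncard_coe_finset, ← Set.ncard_image_of_injective (S : Set W)
        (Sum.inl_injective (β := Fin (Fintype.card W % 2)))]
      apply Set.ncard_le_ncard _ (Set.toFinite _)
      rintro _ ⟨w, hw, rfl⟩
      simpa [S] using hw
    let C : ↥(O \ B) → Finset W := fun c => Finset.univ.filter fun w =>
      ∃ hw : (Sum.inl w : U) ∈ D.verts, D.coe.connectedComponentMk ⟨Sum.inl w, hw⟩ = c.1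
    have hCmem : ∀ c w, w ∈ C c ↔ ∃ hw : (Sum.inl w : U) ∈ D.verts,
        D.coe.connectedComponentMk ⟨Sum.inl w, hw⟩ = c.1 := fun c w => by simp [C]
    have := h S ↥(O \ B) C ?_ ?_ ?_ ?_
    · rw [← Nat.card_eq_fintype_card, Nat.card_coe_set_eq] at this
      omega
    · intro c c' w hw hw'
      rw [hCmem] at hw hw'
      obtain ⟨_, h1⟩ := hw
      obtain ⟨_, h2⟩ := hw'
      exact Subtype.ext (h1.symm.trans h2)
    · intro c
      have h1 : (C c).card = c.1.supp.ncard := by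
        rw [← Set.ncard_coe_finset,
          ← Set.ncard_image_of_injective (C c : Set W)
            (Sum.inl_injective (β := Fin (Fintype.card W % 2))),
          ← Set.ncard_image_of_injective c.1.supp Subtype.val_injective]
        congr 1
        ext x
        simp only [Set.mem_image, Finset.mem_coe, hCmem]
        constructor
        · rintro ⟨w, ⟨hw, hwc⟩, rfl⟩
          exact ⟨⟨_, hw⟩, hwc, rfl⟩
        · rintro ⟨⟨x, hx⟩, hxc, rfl⟩
          rcases x with w | k
          · exact ⟨w, ⟨hx, hxc⟩, rfl⟩
          · exact absurd ⟨⟨Sum.inr k, hx⟩, trivial, hxc⟩ c.2.2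
      rw [h1]
      exact c.2.1
    · intro c w hw
      rw [hCmem] at hw
      obtain ⟨hw, hwc⟩ := hw
      refine ⟨fun hZ => c.2.2 ⟨⟨_, hw⟩, hZ, hwc⟩, fun hS => ?_⟩
      rw [hD] at hw
      exact hw (by simpa [S] using hS)
    · intro c w hw w' hww'
      rw [hCmem] at hw
      obtain ⟨hw, hwc⟩ := hw
      by_cases hw' : (Sum.inl w' : U) ∈ u
      · right; simpa [S] using hw'
      · left
        rw [hCmem]
        refine ⟨(hD _).2 hw', ?_⟩
        rw [← hwc]
        apply SimpleGraph.ConnectedComponent.sound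
        apply SimpleGraph.Adj.reachable
        apply hDadj _ _ hw' ((hD _).1 hw)
        exact ⟨fun h => hww'.ne (Sum.inl_injective h).symm,
          Or.inl ⟨w', w, rfl, rfl, hww'.symm⟩⟩
  obtain ⟨P, hP⟩ := htutte
  rw [SimpleGraph.Subgraph.isPerfectMatching_iff] at hP
  refine ⟨fun a b => P.Adj (Sum.inl a) (Sum.inl b) ∧ G.Adj a b, ?_, ?_, ?_⟩
  · rintro a b ⟨h1, h2⟩
    exact ⟨⟨h1.symm, h2.symm⟩, h2⟩
  · rintro a b c ⟨h1, -⟩ ⟨h2, -⟩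
    exact Sum.inl_injective ((hP _).unique h1 h2)
  · intro a ha
    obtain ⟨y, hy, -⟩ := hP (Sum.inl a)
    obtain ⟨-, ⟨a', b, h1, rfl, h3⟩ | ⟨h1, -⟩⟩ := P.adj_sub hy
    · rw [Sum.inl_injective h1] at *
      exact ⟨b, hy, h3⟩
    · exact absurd h1 ha

variable {I : Type} [Fintype I] [DecidableEq I]

/-- The items with exactly one end in `C`. -/
def cut {W : Type} [DecidableEq W] (p q : I → W) (C : Finset W) : Finset I :=
  Finset.univ.filter fun i => ¬ (p i ∈ C ↔ q i ∈ C)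

/-- A matching of items (loops being ignored) covering every vertex outside `Z`, under a degree
bound and a lower bound for the cuts of the odd sets avoiding `Z`. -/
theorem exists_item_matching {W : Type} [Fintype W] [DecidableEq W] (r : ℕ) (p q : I → W)
    (Z : Finset W) (h1 : ∀ S : Finset W, ∑ v ∈ S, (cut p q {v}).card < r * (S.card + 1))
    (h2 : ∀ C : Finset W, (∀ v ∈ C, v ∉ Z) → Odd C.card → r ≤ (cut p q C).card) :
    ∃ M : Finset I, (∀ i ∈ M, p i ≠ q i) ∧
      (∀ w, ∀ i ∈ M, ∀ j ∈ M, (p i = w ∨ q i = w) → (p j = w ∨ q j = w) → i = j) ∧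
      ∀ w, w ∉ Z → ∃ i ∈ M, p i = w ∨ q i = w := by
  classical
  let G : SimpleGraph W :=
    { Adj := fun a b => a ≠ b ∧ ∃ i, s(p i, q i) = s(a, b)
      symm := ⟨fun a b ⟨h, i, hi⟩ => ⟨h.symm, i, hi.trans Sym2.eq_swap⟩⟩
      loopless := ⟨fun a h => h.1 rfl⟩ }
  obtain ⟨R, hR1, hR2, hR3⟩ := exists_matching_off G Z (by
    intro S ι _ C hdisj hodd hav hcl
    by_contra! hlt
    have h3 : ∑ c : ι, (cut p q (C c)).card ≤ ∑ v ∈ S, (cut p q {v}).card := by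
      rw [← Finset.card_sigma, ← Finset.card_sigma]
      -- the end in `S` of an item leaving `C c`
      let o : (Σ _ : ι, I) → Σ _ : W, I := fun z =>
        ⟨if p z.2 ∈ C z.1 then q z.2 else p z.2, z.2⟩
      have hout : ∀ c i, i ∈ cut p q (C c) → (p i ∈ C c ∧ q i ∉ C c ∧ q i ∈ S) ∨
          (q i ∈ C c ∧ p i ∉ C c ∧ p i ∈ S) := by
        intro c i hi
        simp only [cut, Finset.mem_filter, Finset.mem_univ, true_and] at hi
        by_cases hp : p i ∈ C c
        · have hq : q i ∉ C c := fun hq => hi (by simp [hp, hq])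
          have hne : p i ≠ q i := fun h => hq (h ▸ hp)
          exact Or.inl ⟨hp, hq, (hcl c _ hp (q i) ⟨hne, i, rfl⟩).resolve_left hq⟩
        · have hq : q i ∈ C c := by by_contra hq; exact hi (by simp [hp, hq])
          have hne : q i ≠ p i := fun h => hp (h ▸ hq)
          exact Or.inr ⟨hq, hp, (hcl c _ hq (p i) ⟨hne, i, Sym2.eq_swap⟩).resolve_left hp⟩
      apply Finset.card_le_card_of_injOn o
      · rintro ⟨c, i⟩ hi
        simp only [Finset.coe_sigma, Set.mem_sigma_iff, Finset.mem_coe] at hi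
        simp only [o, Finset.coe_sigma, Set.mem_sigma_iff, Finset.mem_coe]
        rcases hout c i hi.2 with ⟨h3, h4, h5⟩ | ⟨h3, h4, h5⟩
        · have : p i ≠ q i := fun h => h4 (h ▸ h3)
          simp [h3, h5, cut, this]
        · have : q i ≠ p i := fun h => h4 (h ▸ h3)
          simp [h4, h5, cut, this]
      · rintro ⟨c, i⟩ hi ⟨c', i'⟩ hi' heq
        simp only [Finset.coe_sigma, Set.mem_sigma_iff, Finset.mem_coe] at hi hi'
        simp only [o, Sigma.mk.injEq, heq_eq_eq] at heq
        obtain ⟨h3, rfl⟩ := heq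
        rcases hout c i hi.2 with ⟨k1, k2, k3⟩ | ⟨k1, k2, k3⟩ <;>
          rcases hout c' i hi'.2 with ⟨l1, l2, l3⟩ | ⟨l1, l2, l3⟩
        · rw [hdisj c c' _ k1 l1]
        · exact absurd l3 (hav c _ k1).2
        · exact absurd l3 (hav c _ k1).2
        · rw [hdisj c c' _ k1 l1]
    have h4 : Fintype.card ι * r ≤ ∑ c : ι, (cut p q (C c)).card := by
      rw [← smul_eq_mul, ← Finset.card_univ]
      exact Finset.card_nsmul_le_sum _ _ _ fun c _ => h2 _ (fun v hv => (hav c v hv).1) (hodd c)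
    have h5 := h1 S
    have h6 : (S.card + 1) * r ≤ Fintype.card ι * r := Nat.mul_le_mul_right _ hlt
    rw [mul_comm] at h5
    omega)
  -- one item for every edge of the matching
  let f : Sym2 W → Option I := fun z => if h : ∃ i, s(p i, q i) = z then some h.choose else none
  have hf : ∀ i, ∃ j, f s(p i, q i) = some j ∧ s(p j, q j) = s(p i, q i) := by
    intro i
    have h : ∃ j, s(p j, q j) = s(p i, q i) := ⟨i, rfl⟩
    exact ⟨h.choose, by simp only [f, dif_pos h], h.choose_spec⟩
  have hRsym : ∀ i j, s(p j, q j) = s(p i, q i) → R (p i) (q i) → R (p j) (q j) := by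
    intro i j hij hR
    rw [Sym2.eq_iff] at hij
    rcases hij with ⟨h3, h4⟩ | ⟨h3, h4⟩
    · rwa [h3, h4]
    · rw [h3, h4]; exact (hR1 _ _ hR).1
  refine ⟨Finset.univ.filter fun i => R (p i) (q i) ∧ f s(p i, q i) = some i, ?_, ?_, ?_⟩
  · intro i hi
    rw [Finset.mem_filter] at hi
    exact (hR1 _ _ hi.2.1).2.ne
  · intro w i hi j hj hiw hjw
    rw [Finset.mem_filter] at hi hj
    have key : ∀ i, R (p i) (q i) → (p i = w ∨ q i = w) → ∃ b, R w b ∧ s(p i, q i) = s(w, b) := by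
      rintro i hi (rfl | rfl)
      · exact ⟨q i, hi, rfl⟩
      · exact ⟨p i, (hR1 _ _ hi).1, Sym2.eq_swap⟩
    obtain ⟨b, hb, hib⟩ := key i hi.2.1 hiw
    obtain ⟨b', hb', hjb⟩ := key j hj.2.1 hjw
    have h3 := hi.2.2
    have h4 := hj.2.2
    rw [hib] at h3
    rw [hjb, ← hR2 _ _ _ hb hb', h3] at h4
    exact Option.some_injective _ h4
  · intro w hw
    obtain ⟨b, hb⟩ := hR3 w hw
    obtain ⟨hne, i, hi⟩ := (hR1 _ _ hb).2
    obtain ⟨j, hj, hji⟩ := hf i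
    have h3 : R (p i) (q i) := by
      rw [Sym2.eq_iff] at hi
      rcases hi with ⟨h3, h4⟩ | ⟨h3, h4⟩
      · rwa [h3, h4]
      · rw [h3, h4]; exact (hR1 _ _ hb).1
    refine ⟨j, ?_, ?_⟩
    · rw [Finset.mem_filter]
      exact ⟨Finset.mem_univ _, hRsym i j hji h3, hji ▸ hj⟩
    · have h5 := hji.trans hi
      rw [Sym2.eq_iff] at h5
      tauto

end Tutte

/-! ### Odd sets with small cuts -/

section SmallCuts

variable {V I : Type} [Fintype V] [Fintype I] [DecidableEq V] [DecidableEq I]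

/-- The number of items of `J` at the vertex `v`. -/
def itemDeg (p q : I → V) (J : Finset I) (v : V) : ℕ :=
  (J.filter fun i => p i = v ∨ q i = v).card

theorem itemDeg_eq_sum {p q : I → V} (hpq : ∀ i, p i ≠ q i) (J : Finset I) (v : V) :
    itemDeg p q J v = ∑ i ∈ J, ((if p i = v then 1 else 0) + if q i = v then 1 else 0) := by
  rw [itemDeg, Finset.card_filter]
  refine Finset.sum_congr rfl fun i _ => ?_
  by_cases h1 : p i = v <;> by_cases h2 : q i = v
  · exact absurd (h1.trans h2.symm) (hpq i)
  all_goals simp [h1, h2]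

theorem mem_cut {W : Type} [DecidableEq W] {p q : I → W} {C : Finset W} {i : I} :
    i ∈ cut p q C ↔ ¬ (p i ∈ C ↔ q i ∈ C) := by simp [cut]

/-- The handshake identity on `C`: an item counts once for each of its ends in `C`. -/
theorem sum_itemDeg {p q : I → V} (hpq : ∀ i, p i ≠ q i) (J : Finset I) (C : Finset V) :
    ∑ v ∈ C, itemDeg p q J v =
      (J.filter fun i => i ∈ cut p q C).card + 2 * (J.filter fun i => p i ∈ C ∧ q i ∈ C).card := by
  simp only [itemDeg_eq_sum hpq]
  rw [Finset.sum_comm, Finset.card_filter, Finset.card_filter, Finset.mul_sum,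
    ← Finset.sum_add_distrib]
  refine Finset.sum_congr rfl fun i _ => ?_
  rw [Finset.sum_add_distrib, Finset.sum_ite_eq, Finset.sum_ite_eq]
  simp only [mem_cut]
  by_cases h1 : p i ∈ C <;> by_cases h2 : q i ∈ C <;> simp [h1, h2]

theorem cut_comp {W : Type} [DecidableEq W] (p q : I → V) (κ : V → W) (C : Finset W) :
    cut (fun i => κ (p i)) (fun i => κ (q i)) C =
      cut p q (Finset.univ.filter fun v => κ v ∈ C) := by
  ext i; simp [mem_cut]

theorem card_cut_singleton {p q : I → V} (hpq : ∀ i, p i ≠ q i) (v : V) :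
    cut p q {v} = Finset.univ.filter fun i => p i = v ∨ q i = v := by
  ext i
  have := hpq i
  simp only [mem_cut, Finset.mem_singleton, Finset.mem_filter, Finset.mem_univ, true_and]
  constructor
  · intro h; by_contra hh; push Not at hh; exact h (by simp [hh])
  · rintro (h | h) h'
    · exact this (h.trans (h'.1 h).symm)
    · exact this ((h'.2 h).trans h.symm)

/-- A maximal disjoint family of minimal sets with a given property. -/
theorem exists_family (P : Finset V → Prop) (hP : ∀ C, P C → C.Nonempty) :
    ∃ F : Finset (Finset V), (∀ K ∈ F, P K ∧ ∀ K', K' ⊂ K → ¬ P K') ∧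
      (∀ K ∈ F, ∀ K' ∈ F, ∀ v, v ∈ K → v ∈ K' → K = K') ∧
      ∀ C, (∀ K ∈ F, ∀ v ∈ C, v ∉ K) → ¬ P C := by
  classical
  let 𝒜 : Finset (Finset (Finset V)) := Finset.univ.filter fun F =>
    (∀ K ∈ F, P K ∧ ∀ K', K' ⊂ K → ¬ P K') ∧
      (∀ K ∈ F, ∀ K' ∈ F, ∀ v, v ∈ K → v ∈ K' → K = K')
  obtain ⟨F, hF, hmax⟩ := Finset.exists_max_image 𝒜 Finset.card ⟨∅, by simp [𝒜]⟩
  have hF' := (Finset.mem_filter.1 hF).2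
  refine ⟨F, hF'.1, hF'.2, fun C hC hPC => ?_⟩
  obtain ⟨K, hK, hKmin⟩ := Finset.exists_min_image
    (Finset.univ.filter fun K : Finset V => K ⊆ C ∧ P K) Finset.card ⟨C, by simp [hPC]⟩
  rw [Finset.mem_filter] at hK
  obtain ⟨y, hy⟩ := hP K hK.2.2
  have hKF : K ∉ F := fun h => hC K h y (hK.2.1 hy) hy
  have hins : insert K F ∈ 𝒜 := by
    rw [Finset.mem_filter]
    refine ⟨Finset.mem_univ _, ?_, ?_⟩
    · intro L hL
      rcases Finset.mem_insert.1 hL with rfl | hL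
      · refine ⟨hK.2.2, fun K' hK' hPK' => ?_⟩
        have := hKmin K' (by simp [hPK', hK'.subset.trans hK.2.1])
        exact absurd (Finset.card_lt_card hK') (by omega)
      · exact hF'.1 L hL
    · intro L hL L' hL' v hv hv'
      rcases Finset.mem_insert.1 hL with rfl | hL1 <;>
        rcases Finset.mem_insert.1 hL' with rfl | hL2
      · rfl
      · exact absurd hv' (hC L' hL2 v (hK.2.1 hv))
      · exact absurd hv (hC L hL1 v (hK.2.1 hv'))
      · exact hF'.2 L hL1 L' hL2 v hv hv'
  have := hmax _ hins
  rw [Finset.card_insert_of_notMem hKF] at this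
  omega

/-- An odd set with fewer than `r` outgoing items. -/
def OddSmall (r : ℕ) (p q : I → V) (C : Finset V) : Prop :=
  Odd C.card ∧ (cut p q C).card < r

/-- A minimal odd set with small cut can be matched internally after deleting any vertex. -/
theorem exists_inner_matching (r : ℕ) (p q : I → V) (hpq : ∀ i, p i ≠ q i)
    (hdeg : ∀ v, (Finset.univ.filter fun i => p i = v ∨ q i = v).card = r)
    (K : Finset V) (hK : OddSmall r p q K) (hmin : ∀ K', K' ⊂ K → ¬ OddSmall r p q K')
    (x : V) (hx : x ∈ K) :
    ∃ N : Finset I, (∀ i ∈ N, p i ∈ K.erase x ∧ q i ∈ K.erase x) ∧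
      (∀ v, ∀ i ∈ N, ∀ j ∈ N, (p i = v ∨ q i = v) → (p j = v ∨ q j = v) → i = j) ∧
      ∀ v ∈ K.erase x, ∃ i ∈ N, p i = v ∨ q i = v := by
  classical
  let κ : V → Option V := fun v => if v ∈ K.erase x then some v else none
  have hκs : ∀ v w, κ v = some w ↔ v = w ∧ w ∈ K.erase x := by
    intro v w
    by_cases hv : v ∈ K.erase x
    · simp only [κ, if_pos hv, Option.some.injEq]
      exact ⟨fun h => ⟨h, h ▸ hv⟩, fun h => h.1⟩
    · simp only [κ, if_neg hv, reduceCtorEq, false_iff]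
      rintro ⟨rfl, h⟩; exact hv h
  have hκn : ∀ v, κ v = none ↔ v ∉ K.erase x := by
    intro v
    by_cases hv : v ∈ K.erase x
    · simp only [κ, if_pos hv, reduceCtorEq, hv, not_true]
    · simp only [κ, if_neg hv, hv, not_false_eq_true]
  obtain ⟨N, hN1, hN2, hN3⟩ := exists_item_matching r (fun i => κ (p i)) (fun i => κ (q i))
    (Finset.univ.filter fun w => ¬ ∃ v ∈ K.erase x, w = some v) (by
      intro S
      have hb : ∀ w ∈ S, (cut (fun i => κ (p i)) (fun i => κ (q i)) {w}).card ≤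
          r + if w = none then r - 1 else 0 := by
        intro w _
        rw [cut_comp]
        rcases w with _ | v
        · have h1 : cut p q (Finset.univ.filter fun v => κ v ∈ ({none} : Finset (Option V))) ⊆
              cut p q {x} ∪ cut p q K := by
            intro i hi
            simp only [mem_cut, Finset.mem_filter, Finset.mem_univ, true_and,
              Finset.mem_singleton, hκn, Finset.mem_erase, Finset.mem_union] at hi ⊢
            tauto
          have h2 := (Finset.card_le_card h1).trans (Finset.card_union_le _ _)
          rw [card_cut_singleton hpq, hdeg] at h2
          have h3 := hK.2
          simp only [if_true]
          omega
        · have h1 : cut p q (Finset.univ.filter fun u => κ u ∈ ({some v} : Finset (Option V))) ⊆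
              cut p q {v} := by
            intro i hi
            simp only [mem_cut, Finset.mem_filter, Finset.mem_univ, true_and,
              Finset.mem_singleton, hκs] at hi ⊢
            tauto
          have h2 := Finset.card_le_card h1
          rw [card_cut_singleton hpq, hdeg] at h2
          omega
      have h1 := Finset.sum_le_sum hb
      rw [Finset.sum_add_distrib, Finset.sum_const, smul_eq_mul, Finset.sum_ite_eq'] at h1
      have h2 := hK.2
      have h3 : (if none ∈ S then r - 1 else 0) ≤ r - 1 := by split_ifs <;> omega
      have h4 : r * (S.card + 1) = S.card * r + r := by ring
      omega) (by
      intro C hC hodd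
      have hC' : ∀ w ∈ C, ∃ v ∈ K.erase x, w = some v := by
        intro w hw
        have := hC w hw
        rw [Finset.mem_filter, not_and, not_not] at this
        exact this (Finset.mem_univ _)
      rw [cut_comp]
      have hcard : (Finset.univ.filter fun v => κ v ∈ C).card = C.card := by
        apply Finset.card_bij fun v _ => κ v
        · intro v hv; exact (Finset.mem_filter.1 hv).2
        · intro v hv w hw hvw
          obtain ⟨u, hu, hvu⟩ := hC' _ (Finset.mem_filter.1 hv).2
          exact ((hκs v u).1 hvu).1.trans ((hκs w u).1 (Eq.trans (Eq.symm hvw) hvu)).1.symm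
        · intro w hw
          obtain ⟨u, hu, rfl⟩ := hC' w hw
          have h1 : κ u = some u := (hκs _ _).2 ⟨rfl, hu⟩
          exact ⟨u, by simp [h1, hw], h1⟩
      by_contra! hlt
      refine hmin (Finset.univ.filter fun v => κ v ∈ C) ?_ ⟨by rw [hcard]; exact hodd, hlt⟩
      have hsub : (Finset.univ.filter fun v => κ v ∈ C) ⊆ K.erase x := by
        intro v hv
        obtain ⟨u, hu, hvu⟩ := hC' _ (Finset.mem_filter.1 hv).2
        rw [((hκs _ _).1 hvu).1]; exact hu
      exact lt_of_le_of_lt hsub (Finset.erase_ssubset hx))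
  have hends : ∀ v ∈ K.erase x, ∀ i, (κ (p i) = some v ∨ κ (q i) = some v) ↔
      (p i = v ∨ q i = v) := by
    intro v hv i
    rw [hκs, hκs]; tauto
  have hcov : ∀ v ∈ K.erase x, ∃ i ∈ N, p i = v ∨ q i = v := by
    intro v hv
    obtain ⟨i, hi, h⟩ := hN3 (some v) (by simpa using hv)
    exact ⟨i, hi, (hends v hv i).1 h⟩
  have huniq : ∀ v ∈ K.erase x, ∀ i ∈ N, ∀ j ∈ N, (p i = v ∨ q i = v) → (p j = v ∨ q j = v) →
      i = j := fun v hv i hi j hj h1 h2 =>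
    hN2 (some v) i hi j hj ((hends v hv i).2 h1) ((hends v hv j).2 h2)
  -- parity excludes an item leaving `K.erase x`
  have hsum := sum_itemDeg hpq N (K.erase x)
  have hone : ∀ v ∈ K.erase x, itemDeg p q N v = 1 := by
    intro v hv
    obtain ⟨i, hi, h⟩ := hcov v hv
    rw [itemDeg, Finset.card_eq_one]
    refine ⟨i, ?_⟩
    ext j
    rw [Finset.mem_filter, Finset.mem_singleton]
    exact ⟨fun hj => huniq v hv j hj.1 i hi hj.2 h, fun hj => hj ▸ ⟨hi, h⟩⟩
  rw [Finset.sum_congr rfl hone, Finset.sum_const, smul_eq_mul, mul_one,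
    Finset.card_erase_of_mem hx] at hsum
  have hle : (N.filter fun i => i ∈ cut p q (K.erase x)).card ≤ 1 := by
    refine Finset.card_le_one.2 fun i hi j hj => ?_
    rw [Finset.mem_filter, mem_cut] at hi hj
    refine hN2 none i hi.1 j hj.1 ?_ ?_
    · rw [hκn, hκn]; tauto
    · rw [hκn, hκn]; tauto
  obtain ⟨k, hk⟩ := hK.1
  have hzero : (N.filter fun i => i ∈ cut p q (K.erase x)).card = 0 := by omega
  rw [Finset.card_eq_zero, Finset.filter_eq_empty_iff] at hzero
  have hin : ∀ i ∈ N, p i ∈ K.erase x ∧ q i ∈ K.erase x := by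
    intro i hi
    have h1 := hzero hi
    rw [mem_cut, not_not] at h1
    by_cases hp : p i ∈ K.erase x
    · exact ⟨hp, h1.1 hp⟩
    · exact absurd (((hκn _).2 hp).trans ((hκn _).2 fun h => hp (h1.2 h)).symm) (hN1 i hi)
  refine ⟨N, hin, fun v i hi j hj h1 h2 => ?_, hcov⟩
  have hv : v ∈ K.erase x := by
    rcases h1 with rfl | rfl
    · exact (hin i hi).1
    · exact (hin i hi).2
  exact huniq v hv i hi j hj h1 h2

/-- Inside a set `K` with small cut, matched except at `x`, some set of unmatched items has even
degree everywhere and positive degree at `x`. -/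
theorem exists_even_items (r : ℕ) (ho : Odd r) (p q : I → V) (hpq : ∀ i, p i ≠ q i)
    (hdeg : ∀ v, (Finset.univ.filter fun i => p i = v ∨ q i = v).card = r)
    (K : Finset V) (hK : (cut p q K).card < r) (x : V) (hx : x ∈ K) (N : Finset I)
    (hN1 : ∀ i ∈ N, p i ∈ K.erase x ∧ q i ∈ K.erase x)
    (hN2 : ∀ v, ∀ i ∈ N, ∀ j ∈ N, (p i = v ∨ q i = v) → (p j = v ∨ q j = v) → i = j)
    (hN3 : ∀ v ∈ K.erase x, ∃ i ∈ N, p i = v ∨ q i = v) :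
    ∃ Q : Finset I, (∀ i ∈ Q, p i ∈ K ∧ q i ∈ K ∧ i ∉ N) ∧ (∀ v, Even (itemDeg p q Q v)) ∧
      ∃ i ∈ Q, p i = x ∨ q i = x := by
  classical
  let R : Finset I := Finset.univ.filter fun i => p i ∈ K ∧ q i ∈ K ∧ i ∉ N
  have hR : ∀ i, i ∈ R ↔ p i ∈ K ∧ q i ∈ K ∧ i ∉ N := fun i => by simp [R]
  let R' : Finset I := R.filter fun i => ¬ (p i = x ∨ q i = x)
  let E : Finset I := R.filter fun i => p i = x ∨ q i = x
  let o : I → V := fun i => if p i = x then q i else p i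
  have ho1 : ∀ i ∈ E, o i ∈ K.erase x ∧ (p i = o i ∧ q i = x ∨ p i = x ∧ q i = o i) := by
    intro i hi
    rw [Finset.mem_filter, hR] at hi
    have := hpq i
    by_cases hp : p i = x
    · simp only [o, if_pos hp, Finset.mem_erase]
      exact ⟨⟨fun h => this (hp.trans h.symm), hi.1.2.1⟩, Or.inr ⟨hp, trivial⟩⟩
    · simp only [o, if_neg hp, Finset.mem_erase]
      exact ⟨⟨hp, hi.1.1⟩, Or.inl ⟨trivial, hi.2.resolve_left hp⟩⟩
  -- vertices modulo the boundaries of the items of `R'`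
  let δ : V → V → ZMod 2 := fun v => Pi.single v 1
  let bd : I → V → ZMod 2 := fun i => δ (p i) + δ (q i)
  let B : Submodule (ZMod 2) (V → ZMod 2) := Submodule.span (ZMod 2) (bd '' (R' : Set I))
  let π : V → (V → ZMod 2) ⧸ B := fun v => B.mkQ (δ v)
  have hneg : ∀ f : V → ZMod 2, f + f = 0 := fun f => by
    ext v; exact CharTwo.add_self_eq_zero _
  have hπ : ∀ i ∈ R', π (p i) = π (q i) := by
    intro i hi
    rw [← sub_eq_zero, ← map_sub, Submodule.mkQ_apply, Submodule.Quotient.mk_eq_zero]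
    have h1 : δ (p i) - δ (q i) = bd i := by
      rw [sub_eq_iff_eq_add, add_assoc, hneg, add_zero]
    rw [h1]
    exact Submodule.subset_span ⟨i, hi, rfl⟩
  have hcast : ∀ (Q : Finset I) (v : V), (itemDeg p q Q v : ZMod 2) = (∑ i ∈ Q, bd i) v := by
    intro Q v
    rw [itemDeg_eq_sum hpq, Finset.sum_apply]
    push_cast
    refine Finset.sum_congr rfl fun i _ => ?_
    simp only [bd, δ, Pi.add_apply, Pi.single_apply, eq_comm]
  by_cases hinj : ∀ i ∈ E, ∀ j ∈ E, π (o i) = π (o j) → i = j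
  · exfalso
    -- every class meets an item leaving `K`
    have hout : ∀ i, ∃ j, i ∈ E → j ∈ cut p q K ∧ ∃ v ∈ K.erase x, (p j = v ∨ q j = v) ∧
        π v = π (o i) := by
      intro i
      by_cases hi : i ∈ E
      swap
      · exact ⟨i, fun h => absurd h hi⟩
      let C : Finset V := (K.erase x).filter fun v => π v = π (o i)
      have hC : ∀ v, v ∈ C ↔ v ∈ K.erase x ∧ π v = π (o i) := fun v => by
        simp only [C, Finset.mem_filter]
      have hsum := sum_itemDeg hpq R C
      have hcut : (R.filter fun j => j ∈ cut p q C) = {i} := by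
        ext j
        rw [Finset.mem_filter, Finset.mem_singleton]
        constructor
        · rintro ⟨hjR, hj⟩
          rw [mem_cut] at hj
          by_cases hjx : p j = x ∨ q j = x
          · have hjE : j ∈ E := Finset.mem_filter.2 ⟨hjR, hjx⟩
            have hxC : x ∉ C := fun h => Finset.notMem_erase x K ((hC x).1 h).1
            refine (hinj i hi j hjE ?_).symm
            rcases ho1 j hjE with ⟨h1, ⟨h2, h3⟩ | ⟨h2, h3⟩⟩
            · rw [h2, h3] at hj
              have : o j ∈ C := by tauto
              exact ((hC _).1 this).2.symm
            · rw [h2, h3] at hj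
              have : o j ∈ C := by tauto
              exact ((hC _).1 this).2.symm
          · exfalso
            apply hj
            have h1 := hπ j (Finset.mem_filter.2 ⟨hjR, hjx⟩)
            rw [hR] at hjR
            rw [hC, hC, h1, Finset.mem_erase, Finset.mem_erase]
            tauto
        · rintro rfl
          refine ⟨(Finset.mem_filter.1 hi).1, ?_⟩
          obtain ⟨h1, h2⟩ := ho1 j hi
          have h3 : o j ∈ C := (hC _).2 ⟨h1, rfl⟩
          have hxC : x ∉ C := fun h => Finset.notMem_erase x K ((hC x).1 h).1
          rw [mem_cut]
          rcases h2 with ⟨h4, h5⟩ | ⟨h4, h5⟩ <;> rw [h4, h5] <;> tauto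
      rw [hcut, Finset.card_singleton] at hsum
      obtain ⟨v, hv, hvodd⟩ : ∃ v ∈ C, Odd (itemDeg p q R v) := by
        by_contra! hev
        have : Even (∑ v ∈ C, itemDeg p q R v) :=
          Finset.even_sum _ fun v hv => by simpa using hev v hv
        rw [hsum, Nat.even_iff] at this
        omega
      rw [hC] at hv
      obtain ⟨m, hm, hmv⟩ := hN3 v hv.1
      by_contra! hno
      -- otherwise all items at `v` stay in `K`, and exactly one of them lies in `N`
      have hall : (Finset.univ.filter fun j => p j = v ∨ q j = v) =
          insert m (R.filter fun j => p j = v ∨ q j = v) := by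
        ext j
        rw [Finset.mem_insert, Finset.mem_filter, Finset.mem_filter, hR]
        constructor
        · rintro ⟨-, hj⟩
          by_cases hjN : j ∈ N
          · exact Or.inl (hN2 v j hjN m hm hj hmv)
          · right
            have hjc : j ∉ cut p q K := fun h => (hno j).2 h v hv.1 hj hv.2
            rw [mem_cut, not_not] at hjc
            have hvK := Finset.mem_of_mem_erase hv.1
            refine ⟨?_, hj⟩
            rcases hj with rfl | rfl
            · exact ⟨hvK, hjc.1 hvK, hjN⟩
            · exact ⟨hjc.2 hvK, hvK, hjN⟩
        · rintro (rfl | h)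
          · exact ⟨Finset.mem_univ _, hmv⟩
          · exact ⟨Finset.mem_univ _, h.2⟩
      have hcard := hdeg v
      rw [hall, Finset.card_insert_of_notMem (by simp [hR, hm])] at hcard
      change itemDeg p q R v + 1 = r at hcard
      rw [Nat.odd_iff] at hvodd ho
      omega
    choose f hf using hout
    have hend : ∀ j ∈ cut p q K, ∀ v ∈ K, ∀ w ∈ K, (p j = v ∨ q j = v) → (p j = w ∨ q j = w) →
        v = w := by
      intro j hj v hv w hw h1 h2
      rw [mem_cut] at hj
      rcases h1 with rfl | rfl <;> rcases h2 with rfl | rfl <;> first | rfl | (exfalso; tauto)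
    have hsub : E.image f ∪ (Finset.univ.filter fun j => (p j = x ∨ q j = x) ∧ j ∈ cut p q K) ⊆
        cut p q K := by
      intro j hj
      rcases Finset.mem_union.1 hj with hj | hj
      · obtain ⟨i, hi, rfl⟩ := Finset.mem_image.1 hj
        exact (hf i hi).1
      · exact (Finset.mem_filter.1 hj).2.2
    have h1 := Finset.card_le_card hsub
    rw [Finset.card_union_of_disjoint, Finset.card_image_of_injOn] at h1
    · have h2 : (Finset.univ.filter fun j => p j = x ∨ q j = x) ⊆
          E ∪ (Finset.univ.filter fun j => (p j = x ∨ q j = x) ∧ j ∈ cut p q K) := by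
        intro j hj
        rw [Finset.mem_filter] at hj
        simp only [E, Finset.mem_union, Finset.mem_filter, Finset.mem_univ, true_and, hR]
        have hjN : j ∉ N := fun h => by
          have := hN1 j h
          rw [Finset.mem_erase, Finset.mem_erase] at this
          tauto
        rcases hj.2 with h | h
        · rw [mem_cut, h]; tauto
        · rw [mem_cut, h]; tauto
      have h3 := (Finset.card_le_card h2).trans (Finset.card_union_le _ _)
      rw [hdeg] at h3
      omega
    · intro i hi j hj hij
      rw [Finset.mem_coe] at hi hj
      obtain ⟨k1, v, hv, hv1, hv2⟩ := hf i hi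
      obtain ⟨l1, w, hw, hw1, hw2⟩ := hf j hj
      rw [← hij] at hw1
      have := hend _ k1 v (Finset.mem_of_mem_erase hv) w (Finset.mem_of_mem_erase hw) hv1 hw1
      exact hinj i hi j hj (by rw [← hv2, ← hw2, this])
    · rw [Finset.disjoint_left]
      intro j hj hj'
      obtain ⟨i, hi, rfl⟩ := Finset.mem_image.1 hj
      obtain ⟨k1, v, hv, hv1, hv2⟩ := hf i hi
      rw [Finset.mem_filter] at hj'
      have := hend _ k1 v (Finset.mem_of_mem_erase hv) x hx hv1 hj'.2.1
      exact Finset.ne_of_mem_erase hv this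
  · push Not at hinj
    obtain ⟨i, hi, j, hj, hij, hne⟩ := hinj
    -- two items at `x` ending in the same class close up to an even set
    have hmem : δ (o i) + δ (o j) ∈ B := by
      have h1 : δ (o i) + δ (o j) = δ (o i) - δ (o j) := by
        rw [eq_sub_iff_add_eq, add_assoc, hneg, add_zero]
      rw [h1, ← Submodule.Quotient.mk_eq_zero, ← Submodule.mkQ_apply, map_sub, sub_eq_zero]
      exact hij
    rw [Submodule.mem_span_image_finset_iff_exists_fun'] at hmem
    obtain ⟨c, hc⟩ := hmem
    have hc' : ∑ k ∈ R'.filter (fun k => c k = 1), bd k = δ (o i) + δ (o j) := by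
      rw [← hc, Finset.sum_filter]
      refine Finset.sum_congr rfl fun k _ => ?_
      rcases (by decide : ∀ a : ZMod 2, a = 0 ∨ a = 1) (c k) with h | h <;> simp [h]
    have hbdE : ∀ i ∈ E, bd i = δ (o i) + δ x := by
      intro i hi
      rcases (ho1 i hi).2 with ⟨h2, h3⟩ | ⟨h2, h3⟩
      · simp only [bd]; rw [← h2, h3]
      · simp only [bd]; rw [← h3, h2, add_comm]
    have hiR := Finset.mem_filter.1 hi
    have hjR := Finset.mem_filter.1 hj
    have hi' : i ∉ insert j (R'.filter fun k => c k = 1) := by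
      simp only [Finset.mem_insert, hne, R', Finset.mem_filter, false_or]
      tauto
    have hj' : j ∉ R'.filter fun k => c k = 1 := by
      simp only [R', Finset.mem_filter]
      tauto
    refine ⟨insert i (insert j (R'.filter fun k => c k = 1)), ?_, ?_, i,
      Finset.mem_insert_self _ _, hiR.2⟩
    · intro k hk
      rw [← hR]
      rcases Finset.mem_insert.1 hk with rfl | hk
      · exact hiR.1
      rcases Finset.mem_insert.1 hk with rfl | hk
      · exact hjR.1
      · exact (Finset.mem_filter.1 (Finset.mem_filter.1 hk).1).1
    · intro v
      rw [← ZMod.natCast_eq_zero_iff_even, hcast, Finset.sum_insert hi', Finset.sum_insert hj', hc',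
        hbdE i hi, hbdE j hj]
      have : δ (o i) + δ x + (δ (o j) + δ x + (δ (o i) + δ (o j))) =
          (δ (o i) + δ (o i)) + (δ (o j) + δ (o j)) + (δ x + δ x) := by abel
      rw [this, hneg (δ (o i)), hneg (δ (o j)), hneg (δ x), add_zero, add_zero]
      rfl

end SmallCuts

/-! ### Schedules in regular systems -/

section Assembly

variable {V I : Type} [Fintype V] [Fintype I] [DecidableEq V] [DecidableEq I]

/-- An enumeration of `S` that starts with `A` and ends with `B`. -/
theorem exists_positions (S A B : Finset I) (hA : A ⊆ S) (hB : B ⊆ S) (hAB : Disjoint A B)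
    (hB1 : B.card ≤ 1) :
    ∃ pos : I → ℕ, (∀ i ∈ S, pos i < S.card) ∧ (∀ i ∈ S, ∀ j ∈ S, pos i = pos j → i = j) ∧
      (∀ m < S.card, ∃ i ∈ S, pos i = m) ∧ (∀ i ∈ S, i ∈ A ↔ pos i < A.card) ∧
      ∀ i ∈ S, i ∈ B ↔ B.Nonempty ∧ pos i = S.card - 1 := by
  let R : Finset I := (S \ A) \ B
  let l : List I := A.toList ++ (R.toList ++ B.toList)
  have hmem : ∀ i, i ∈ l ↔ i ∈ S := by
    intro i
    simp only [l, List.mem_append, Finset.mem_toList, R, Finset.mem_sdiff]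
    have := @hA i
    have := @hB i
    tauto
  have hcardR : A.card + (R.card + B.card) = S.card := by
    have h1 : B ⊆ S \ A := fun i hi =>
      Finset.mem_sdiff.2 ⟨hB hi, fun h => Finset.disjoint_left.1 hAB h hi⟩
    have h2 := Finset.card_sdiff_add_card_eq_card h1
    have h3 := Finset.card_sdiff_add_card_eq_card hA
    change A.card + (((S \ A) \ B).card + B.card) = S.card
    omega
  have hlen : l.length = S.card := by
    simp only [l, List.length_append, Finset.length_toList]
    exact hcardR
  have hnd : l.Nodup := by
    have h1 : (R.toList ++ B.toList).Nodup := by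
      rw [List.nodup_append']
      refine ⟨R.nodup_toList, B.nodup_toList, fun i h1 h2 => ?_⟩
      rw [Finset.mem_toList] at h1 h2
      exact (Finset.mem_sdiff.1 h1).2 h2
    rw [List.nodup_append']
    refine ⟨A.nodup_toList, h1, fun i h1 h2 => ?_⟩
    rw [List.mem_append, Finset.mem_toList, Finset.mem_toList] at h2
    rw [Finset.mem_toList] at h1
    rcases h2 with h2 | h2
    · exact (Finset.mem_sdiff.1 (Finset.mem_sdiff.1 h2).1).2 h1
    · exact Finset.disjoint_left.1 hAB h1 h2
  have hAlt : ∀ i ∈ A, l.idxOf i < A.card := by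
    intro i hi
    rw [List.idxOf_append_of_mem (Finset.mem_toList.2 hi)]
    exact (List.idxOf_lt_length_of_mem (Finset.mem_toList.2 hi)).trans_eq (Finset.length_toList _)
  have hAge : ∀ i, i ∉ A → l.idxOf i = A.card + (R.toList ++ B.toList).idxOf i := by
    intro i hi
    rw [List.idxOf_append_of_notMem (fun h => hi (Finset.mem_toList.1 h)), Finset.length_toList]
  have hlt : ∀ i ∈ S, l.idxOf i < S.card := fun i hi =>
    (List.idxOf_lt_length_of_mem ((hmem i).2 hi)).trans_eq hlen
  refine ⟨fun i => l.idxOf i, hlt,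
    fun i hi j hj h => (List.idxOf_inj ((hmem i).2 hi)).1 h, fun m hm => ?_, fun i hi => ?_,
    fun i hi => ?_⟩
  · have hm' : m < l.length := by omega
    exact ⟨l[m], (hmem _).1 (List.getElem_mem hm'), hnd.idxOf_getElem m hm'⟩
  · refine ⟨hAlt i, fun h => ?_⟩
    by_contra hiA
    have := hAge i hiA
    dsimp only at h
    omega
  · constructor
    · intro hiB
      refine ⟨⟨i, hiB⟩, ?_⟩
      have hiA : i ∉ A := fun h => Finset.disjoint_left.1 hAB h hiB
      have hiR : i ∉ R := fun h => (Finset.mem_sdiff.1 h).2 hiB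
      have h1 := hAge i hiA
      rw [List.idxOf_append_of_notMem (fun h => hiR (Finset.mem_toList.1 h)),
        Finset.length_toList] at h1
      have h2 := hlt i hi
      have h3 := Finset.card_pos.2 ⟨i, hiB⟩
      dsimp only
      omega
    · rintro ⟨⟨b, hb⟩, h⟩
      by_contra hiB
      have hcB : B.card = 1 := le_antisymm hB1 (Finset.card_pos.2 ⟨b, hb⟩)
      dsimp only at h
      by_cases hiA : i ∈ A
      · have := hAlt i hiA
        omega
      · have hiR : i ∈ R := Finset.mem_sdiff.2 ⟨Finset.mem_sdiff.2 ⟨hi, hiA⟩, hiB⟩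
        have h1 := hAge i hiA
        rw [List.idxOf_append_of_mem (Finset.mem_toList.2 hiR)] at h1
        have h2 := (List.idxOf_lt_length_of_mem (Finset.mem_toList.2 hiR)).trans_eq
          (Finset.length_toList _)
        omega

theorem hasSchedule_even_regular (r : ℕ) (hr : 2 ≤ r) (he : Even r) (p q : I → V)
    (hdeg : ∀ v, (Finset.univ.filter fun i => p i = v ∨ q i = v).card = r) :
    HasSchedule r 2 p q := by
  have h := fun v => exists_positions (Finset.univ.filter fun i => p i = v ∨ q i = v) ∅ ∅
    (Finset.empty_subset _) (Finset.empty_subset _) (Finset.disjoint_empty_left _) (by simp)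
  choose pos h1 h2 _ _ _ using h
  refine hasSchedule_of_even r hr he p q pos (fun v i hi => ?_) fun v i j hi hj hij => ?_
  · exact (h1 v i (by simp [hi])).trans_eq (hdeg v)
  · exact h2 v i (by simp [hi]) j (by simp [hj]) hij

/-- After contracting each set of a maximal disjoint family `F` of odd sets with small cut, there is
a matching that covers all vertices outside these sets. -/
theorem exists_outer_matching (r : ℕ) (hr : 0 < r) (p q : I → V) (hpq : ∀ i, p i ≠ q i)
    (hdeg : ∀ v, (Finset.univ.filter fun i => p i = v ∨ q i = v).card = r)
    (F : Finset (Finset V)) (hF1 : ∀ K ∈ F, OddSmall r p q K)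
    (hF2 : ∀ K ∈ F, ∀ K' ∈ F, ∀ v, v ∈ K → v ∈ K' → K = K')
    (hF3 : ∀ C, (∀ K ∈ F, ∀ v ∈ C, v ∉ K) → ¬ OddSmall r p q C) :
    ∃ M : Finset I, (∀ i ∈ M, ∀ K ∈ F, ¬ (p i ∈ K ∧ q i ∈ K)) ∧
      (∀ v, ∀ i ∈ M, ∀ j ∈ M, (p i = v ∨ q i = v) → (p j = v ∨ q j = v) → i = j) ∧
      (∀ K ∈ F, ∀ v ∈ K, ∀ w ∈ K, ∀ i ∈ M, ∀ j ∈ M, (p i = v ∨ q i = v) → (p j = w ∨ q j = w) →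
        i = j) ∧
      ∀ v, (∀ K ∈ F, v ∉ K) → ∃ i ∈ M, p i = v ∨ q i = v := by
  classical
  let κ : V → Finset V ⊕ V := fun v =>
    if h : ∃ K ∈ F, v ∈ K then Sum.inl h.choose else Sum.inr v
  have hκ1 : ∀ K ∈ F, ∀ v ∈ K, κ v = Sum.inl K := by
    intro K hK v hv
    have h : ∃ K ∈ F, v ∈ K := ⟨K, hK, hv⟩
    simp only [κ, dif_pos h]
    rw [hF2 _ h.choose_spec.1 K hK v h.choose_spec.2 hv]
  have hκ2 : ∀ v, (∀ K ∈ F, v ∉ K) → κ v = Sum.inr v := by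
    intro v hv
    have h : ¬ ∃ K ∈ F, v ∈ K := fun ⟨K, hK, h⟩ => hv K hK h
    simp only [κ, dif_neg h]
  have hκl : ∀ v K, κ v = Sum.inl K → K ∈ F ∧ v ∈ K := by
    intro v K h
    by_cases hv : ∃ K' ∈ F, v ∈ K'
    · obtain ⟨K', hK', hv⟩ := hv
      rw [hκ1 K' hK' v hv, Sum.inl.injEq] at h
      exact h ▸ ⟨hK', hv⟩
    · rw [hκ2 v fun K hK h => hv ⟨K, hK, h⟩] at h
      exact absurd h Sum.inr_ne_inl
  have hκr : ∀ v u, κ v = Sum.inr u → v = u ∧ ∀ K ∈ F, v ∉ K := by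
    intro v u h
    by_cases hv : ∃ K' ∈ F, v ∈ K'
    · obtain ⟨K', hK', hv⟩ := hv
      rw [hκ1 K' hK' v hv] at h
      exact absurd h Sum.inl_ne_inr
    · have hv' : ∀ K ∈ F, v ∉ K := fun K hK h => hv ⟨K, hK, h⟩
      rw [hκ2 v hv', Sum.inr.injEq] at h
      exact ⟨h, hv'⟩
  have hbound : ∀ w, (cut (fun i => κ (p i)) (fun i => κ (q i)) {w}).card ≤ r := by
    intro w
    rw [cut_comp]
    simp only [Finset.mem_singleton]
    by_cases hne : ∃ v, κ v = w
    · obtain ⟨v, rfl⟩ := hne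
      by_cases hv : ∃ K ∈ F, v ∈ K
      · obtain ⟨K, hK, hv⟩ := hv
        have : (Finset.univ.filter fun u => κ u = κ v) = K := by
          ext u
          rw [Finset.mem_filter, hκ1 K hK v hv]
          exact ⟨fun h => (hκl u K h.2).2, fun h => ⟨Finset.mem_univ _, hκ1 K hK u h⟩⟩
        rw [this]
        exact (hF1 K hK).2.le
      · have hv' : ∀ K ∈ F, v ∉ K := fun K hK h => hv ⟨K, hK, h⟩
        have : (Finset.univ.filter fun u => κ u = κ v) = {v} := by
          ext u
          rw [Finset.mem_filter, Finset.mem_singleton]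
          refine ⟨fun h => (hκr u v (h.2.trans (hκ2 v hv'))).1, ?_⟩
          rintro rfl
          exact ⟨Finset.mem_univ _, rfl⟩
        rw [this, card_cut_singleton hpq, hdeg]
    · have : (Finset.univ.filter fun u => κ u = w) = ∅ := by
        ext u
        simp only [Finset.mem_filter, Finset.notMem_empty, iff_false]
        exact fun h => hne ⟨u, h.2⟩
      rw [this]
      simp [cut]
  obtain ⟨M, hM1, hM2, hM3⟩ := exists_item_matching r (fun i => κ (p i)) (fun i => κ (q i))
    (Finset.univ.filter fun w => ¬ ∃ v, (∀ K ∈ F, v ∉ K) ∧ w = Sum.inr v) (by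
      intro S
      have h1 := Finset.sum_le_sum fun w (_ : w ∈ S) => hbound w
      rw [Finset.sum_const, smul_eq_mul] at h1
      have h2 : r * (S.card + 1) = S.card * r + r := by ring
      omega) (by
      intro C hC hodd
      have hC' : ∀ w ∈ C, ∃ v, (∀ K ∈ F, v ∉ K) ∧ w = Sum.inr v := by
        intro w hw
        have := hC w hw
        rw [Finset.mem_filter, not_and, not_not] at this
        exact this (Finset.mem_univ _)
      rw [cut_comp]
      have hcard : (Finset.univ.filter fun v => κ v ∈ C).card = C.card := by
        apply Finset.card_bij fun v _ => κ v
        · intro v hv; exact (Finset.mem_filter.1 hv).2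
        · intro v hv w hw hvw
          obtain ⟨u, hu, hvu⟩ := hC' _ (Finset.mem_filter.1 hv).2
          exact (hκr v u hvu).1.trans (hκr w u (Eq.trans (Eq.symm hvw) hvu)).1.symm
        · intro w hw
          obtain ⟨u, hu, rfl⟩ := hC' w hw
          exact ⟨u, by simp [hκ2 u hu, hw], hκ2 u hu⟩
      by_contra! hlt
      refine hF3 (Finset.univ.filter fun v => κ v ∈ C) (fun K hK v hv => ?_)
        ⟨by rw [hcard]; exact hodd, hlt⟩
      obtain ⟨u, hu, hvu⟩ := hC' _ (Finset.mem_filter.1 hv).2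
      exact (hκr v u hvu).2 K hK)
  refine ⟨M, ?_, ?_, ?_, ?_⟩
  · rintro i hi K hK ⟨h1, h2⟩
    exact hM1 i hi ((hκ1 K hK _ h1).trans (hκ1 K hK _ h2).symm)
  · intro v i hi j hj h1 h2
    refine hM2 (κ v) i hi j hj ?_ ?_
    · exact h1.imp (congrArg κ) (congrArg κ)
    · exact h2.imp (congrArg κ) (congrArg κ)
  · intro K hK v hv w hw i hi j hj h1 h2
    refine hM2 (Sum.inl K) i hi j hj ?_ ?_
    · rw [← hκ1 K hK v hv]; exact h1.imp (congrArg κ) (congrArg κ)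
    · rw [← hκ1 K hK w hw]; exact h2.imp (congrArg κ) (congrArg κ)
  · intro v hv
    obtain ⟨i, hi, h⟩ := hM3 (Sum.inr v) (by
      rw [Finset.mem_filter, not_and, not_not]
      exact fun _ => ⟨v, hv, rfl⟩)
    exact ⟨i, hi, h.imp (fun h => (hκr _ _ h).1) fun h => (hκr _ _ h).1⟩

/-- The outer matching and the inner matchings of the sets `K` in `F` together form the matching `M`,
and the tokens are the exceptional vertices `x K` that it misses. At each vertex the numbering
starts with the items of the sets `Q y`, an even number of them, and ends with the item of `M`. -/
theorem hasSchedule_odd_regular (r : ℕ) (hr : 3 ≤ r) (ho : Odd r) (p q : I → V)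
    (hpq : ∀ i, p i ≠ q i)
    (hdeg : ∀ v, (Finset.univ.filter fun i => p i = v ∨ q i = v).card = r) :
    HasSchedule r 12 p q := by
  classical
  obtain ⟨F, hF1, hF2, hF3⟩ := exists_family (OddSmall r p q) fun C hC =>
    Finset.card_pos.1 hC.1.pos
  obtain ⟨M₁, hM1, hM2, hM3, hM4⟩ := exists_outer_matching r (by omega) p q hpq hdeg F
    (fun K hK => (hF1 K hK).1) hF2 hF3
  -- the only vertex of `K` that may be covered from outside
  have hx : ∀ K : Finset V, K ∈ F → ∃ x, x ∈ K ∧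
      ∀ i ∈ M₁, ∀ v ∈ K, (p i = v ∨ q i = v) → v = x := by
    intro K hK
    by_cases h : ∃ i ∈ M₁, ∃ v ∈ K, p i = v ∨ q i = v
    · obtain ⟨i, hi, v, hv, hiv⟩ := h
      refine ⟨v, hv, fun j hj w hw hjw => ?_⟩
      have hji := hM3 K hK w hw v hv j hj i hi hjw hiv
      subst hji
      have := hM1 j hj K hK
      rcases hiv with rfl | rfl <;> rcases hjw with rfl | rfl <;>
        first | rfl | (exfalso; tauto)
    · obtain ⟨x, hx⟩ := Finset.card_pos.1 (hF1 K hK).1.1.pos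
      exact ⟨x, hx, fun i hi v hv hiv => absurd ⟨i, hi, v, hv, hiv⟩ h⟩
  rcases isEmpty_or_nonempty V with hV | hV
  · have : IsEmpty I := ⟨fun i => hV.elim (p i)⟩
    exact hasSchedule_of_odd r hr ho p q hpq (fun _ _ => 0) (fun v => hV.elim v)
      (fun v => hV.elim v) (fun v => hV.elim v) (fun _ => False) ∅ (fun _ => ∅)
      (fun v => hV.elim v) (fun v => hV.elim v) (fun v => hV.elim v) (fun v => hV.elim v)
      (fun v => hV.elim v)
  choose! x hx using hx
  have hN : ∀ K : Finset V, ∃ N : Finset I, K ∈ F →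
      (∀ i ∈ N, p i ∈ K.erase (x K) ∧ q i ∈ K.erase (x K)) ∧
      (∀ v, ∀ i ∈ N, ∀ j ∈ N, (p i = v ∨ q i = v) → (p j = v ∨ q j = v) → i = j) ∧
      ∀ v ∈ K.erase (x K), ∃ i ∈ N, p i = v ∨ q i = v := by
    intro K
    by_cases hK : K ∈ F
    · obtain ⟨N, hN⟩ := exists_inner_matching r p q hpq hdeg K (hF1 K hK).1 (hF1 K hK).2 (x K)
        (hx K hK).1
      exact ⟨N, fun _ => hN⟩
    · exact ⟨∅, fun h => absurd h hK⟩
  choose N hN using hN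
  have hNK : ∀ K ∈ F, ∀ i ∈ N K, ∀ v, (p i = v ∨ q i = v) → v ∈ K ∧ v ≠ x K := by
    intro K hK i hi v hv
    have h := (hN K hK).1 i hi
    rw [Finset.mem_erase, Finset.mem_erase] at h
    rcases hv with rfl | rfl
    · exact ⟨h.1.2, h.1.1⟩
    · exact ⟨h.2.2, h.2.1⟩
  let T : V → Prop := fun v => (∀ i ∈ M₁, ¬ (p i = v ∨ q i = v)) ∧ ∃ K ∈ F, v = x K
  have hQ : ∀ y, ∃ Q : Finset I, T y → ∃ K ∈ F, y = x K ∧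
      (∀ i ∈ Q, p i ∈ K ∧ q i ∈ K ∧ i ∉ N K) ∧ (∀ v, Even (itemDeg p q Q v)) ∧
      ∃ i ∈ Q, p i = y ∨ q i = y := by
    intro y
    by_cases hy : T y
    · obtain ⟨K, hK, rfl⟩ := hy.2
      obtain ⟨Q, hQ⟩ := exists_even_items r ho p q hpq hdeg K (hF1 K hK).1.2 (x K) (hx K hK).1
        (N K) (hN K hK).1 (hN K hK).2.1 (hN K hK).2.2
      exact ⟨Q, fun _ => ⟨K, hK, rfl, hQ⟩⟩
    · exact ⟨∅, fun h => absurd h hy⟩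
  choose Q hQ using hQ
  have hQT : ∀ y z, T y → T z → ∀ i ∈ Q y, ∀ j ∈ Q z, ∀ v, (p i = v ∨ q i = v) →
      (p j = v ∨ q j = v) → y = z := by
    intro y z hy hz i hi j hj v hiv hjv
    obtain ⟨K, hK, rfl, h1, -⟩ := hQ y hy
    obtain ⟨L, hL, rfl, h2, -⟩ := hQ z hz
    have h3 := h1 i hi
    have h4 := h2 j hj
    rw [hF2 K hK L hL v (by rcases hiv with rfl | rfl; exacts [h3.1, h3.2.1])
      (by rcases hjv with rfl | rfl; exacts [h4.1, h4.2.1])]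
  let M : Finset I := Finset.univ.filter fun i => i ∈ M₁ ∨ ∃ K ∈ F, i ∈ N K
  have hM : ∀ i, i ∈ M ↔ i ∈ M₁ ∨ ∃ K ∈ F, i ∈ N K := fun i => by simp [M]
  have hMuniq : ∀ v, ∀ i ∈ M, ∀ j ∈ M, (p i = v ∨ q i = v) → (p j = v ∨ q j = v) → i = j := by
    intro v i hi j hj hiv hjv
    rcases (hM i).1 hi with hi | ⟨K, hK, hi⟩ <;> rcases (hM j).1 hj with hj | ⟨L, hL, hj⟩
    · exact hM2 v i hi j hj hiv hjv
    · have h := hNK L hL j hj v hjv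
      exact absurd ((hx L hL).2 i hi v h.1 hiv) h.2
    · have h := hNK K hK i hi v hiv
      exact absurd ((hx K hK).2 j hj v h.1 hjv) h.2
    · have hKL := hF2 K hK L hL v (hNK K hK i hi v hiv).1 (hNK L hL j hj v hjv).1
      subst hKL
      exact (hN K hK).2.1 v i hi j hj hiv hjv
  have hMT : ∀ v, T v → ∀ i ∈ M, ¬ (p i = v ∨ q i = v) := by
    rintro v ⟨h1, K, hK, rfl⟩ i hi hiv
    rcases (hM i).1 hi with hi | ⟨L, hL, hi⟩
    · exact h1 i hi hiv
    · have h := hNK L hL i hi _ hiv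
      rw [hF2 K hK L hL _ (hx K hK).1 h.1] at h
      exact h.2 rfl
  have hMcov : ∀ v, ¬ T v → ∃ i ∈ M, p i = v ∨ q i = v := by
    intro v hv
    by_cases hvF : ∃ K ∈ F, v ∈ K
    · obtain ⟨K, hK, hvK⟩ := hvF
      by_cases hvx : v = x K
      · have h : ¬ ∀ i ∈ M₁, ¬ (p i = v ∨ q i = v) := fun h => hv ⟨h, K, hK, hvx⟩
        push Not at h
        obtain ⟨i, hi, h⟩ := h
        exact ⟨i, (hM i).2 (Or.inl hi), h⟩
      · obtain ⟨i, hi, h⟩ := (hN K hK).2.2 v (Finset.mem_erase.2 ⟨hvx, hvK⟩)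
        exact ⟨i, (hM i).2 (Or.inr ⟨K, hK, hi⟩), h⟩
    · obtain ⟨i, hi, h⟩ := hM4 v fun K hK h => hvF ⟨K, hK, h⟩
      exact ⟨i, (hM i).2 (Or.inl hi), h⟩
  have hMQ : ∀ y, T y → ∀ i ∈ Q y, i ∉ M := by
    intro y hy i hi hiM
    obtain ⟨K, hK, rfl, h1, -⟩ := hQ y hy
    obtain ⟨h2, h3, h4⟩ := h1 i hi
    rcases (hM i).1 hiM with h | ⟨L, hL, h⟩
    · exact hM1 i h K hK ⟨h2, h3⟩
    · rw [hF2 K hK L hL _ h2 (hNK L hL i h _ (Or.inl rfl)).1] at h4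
      exact h4 h
  let S : V → Finset I := fun v => Finset.univ.filter fun i => p i = v ∨ q i = v
  let A : V → Finset I := fun v => (S v).filter fun i => ∃ y, T y ∧ i ∈ Q y
  let B : V → Finset I := fun v => (S v).filter fun i => i ∈ M
  have hS : ∀ v i, i ∈ S v ↔ (p i = v ∨ q i = v) := fun v i => by simp [S]
  have hA : ∀ v i, i ∈ A v ↔ (p i = v ∨ q i = v) ∧ ∃ y, T y ∧ i ∈ Q y := fun v i => by
    simp only [A, Finset.mem_filter, hS]
  have hB : ∀ v i, i ∈ B v ↔ (p i = v ∨ q i = v) ∧ i ∈ M := fun v i => by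
    simp only [B, Finset.mem_filter, hS]
  have hAeven : ∀ v, Even (A v).card := by
    intro v
    rcases (A v).eq_empty_or_nonempty with h | ⟨i, hi⟩
    · simp [h]
    · obtain ⟨hiv, y, hy, hiy⟩ := (hA v i).1 hi
      have : A v = (Q y).filter fun i => p i = v ∨ q i = v := by
        ext j
        rw [hA, Finset.mem_filter]
        constructor
        · rintro ⟨hj, z, hz, hjz⟩
          rw [hQT y z hy hz i hiy j hjz v hiv hj]
          exact ⟨hjz, hj⟩
        · exact fun h => ⟨h.2, y, hy, h.1⟩
      rw [this]
      obtain ⟨K, -, -, -, h2, -⟩ := hQ y hy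
      exact h2 v
  have hpos := fun v => exists_positions (S v) (A v) (B v) (Finset.filter_subset _ _)
    (Finset.filter_subset _ _)
    (Finset.disjoint_left.2 fun i h1 h2 => by
      obtain ⟨-, y, hy, h3⟩ := (hA v i).1 h1
      exact hMQ y hy i h3 ((hB v i).1 h2).2)
    (Finset.card_le_one.2 fun i hi j hj => by
      rw [hB] at hi hj
      exact hMuniq v i hi.2 j hj.2 hi.1 hj.1)
  choose pos h1 h2 h3 h4 h5 using hpos
  have hSr : ∀ v, (S v).card = r := hdeg
  simp only [hSr, hS] at h1 h2 h3 h4 h5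
  refine hasSchedule_of_odd r hr ho p q hpq pos h1 (fun v i j hi hj => h2 v i hi j hj) h3 T M Q
    ?_ ?_ ?_ ?_ ?_
  · intro v i hi
    have hBT : (B v).Nonempty ↔ ¬ T v := by
      constructor
      · rintro ⟨j, hj⟩ hT
        exact hMT v hT j ((hB v j).1 hj).2 ((hB v j).1 hj).1
      · intro hT
        obtain ⟨j, hj, hjv⟩ := hMcov v hT
        exact ⟨j, (hB v j).2 ⟨hjv, hj⟩⟩
    rw [← hBT, ← h5 v i hi, hB]
    exact ⟨fun h => ⟨hi, h⟩, fun h => h.2⟩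
  · intro v i j hi hj hij y hy hiy
    have hiA := (h4 v i hi).1 ((hA v i).2 ⟨hi, y, hy, hiy⟩)
    obtain ⟨k, hk⟩ := hAeven v
    obtain ⟨-, z, hz, hjz⟩ := (hA v j).1 ((h4 v j hj).2 (by omega))
    rw [hQT y z hy hz i hiy j hjz v hi hj]
    exact hjz
  · intro y z i hy hz hiy hiz
    exact hQT y z hy hz i hiy i hiz _ (Or.inl rfl) (Or.inl rfl)
  · intro y i hy hi h0
    obtain ⟨K, -, -, -, -, j, hj, hjy⟩ := hQ y hy
    have hpos : 0 < (A y).card := Finset.card_pos.2 ⟨j, (hA y j).2 ⟨hjy, y, hy, hj⟩⟩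
    obtain ⟨-, z, hz, hiz⟩ := (hA y i).1 ((h4 y i hi).2 (by omega))
    rw [hQT y z hy hz j hj i hiz y hjy hi]
    exact hiz
  · intro y i hy hi hlast z hz hiz
    have hiA := (h4 y i hi).1 ((hA y i).2 ⟨hi, z, hz, hiz⟩)
    have hle := Finset.card_le_card (Finset.filter_subset (fun i => ∃ y, T y ∧ i ∈ Q y) (S y))
    rw [hSr] at hle
    change (A y).card ≤ r at hle
    obtain ⟨k, hk⟩ := hAeven y
    obtain ⟨l, hl⟩ := ho
    omega

end Assembly

/-! ### Doubling a hypergraph into a multigraph -/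

/-- It suffices to schedule regular multigraphs: two disjoint copies of the hypergraph have a dual
that becomes an `r`-regular multigraph once every vertex of degree one joins the two copies of its
edge. -/
theorem universal_of_schedule (r c : ℕ)
    (hsched : ∀ (V I : Type) [Fintype V] [Fintype I] [DecidableEq V] [DecidableEq I] (p q : I → V),
      (∀ i, p i ≠ q i) → (∀ v, (Finset.univ.filter fun i => p i = v ∨ q i = v).card = r) →
      HasSchedule r c p q) :
    ∃ C : ℝ, 0 < C ∧ ∀ n : ℕ, 1 ≤ n → ∃ (N : ℕ) (EH : Finset (Finset (Fin N))),
      (∀ e ∈ EH, e.card = r) ∧ (N : ℝ) ≤ C * n ∧ (EH.card : ℝ) ≤ C * (n : ℝ) ^ ((r : ℝ) / 2) ∧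
      HypergraphUniversal r n 2 N EH := by
  classical
  obtain ⟨C, hC, hhost⟩ := exists_host r c
  refine ⟨C + 1, by positivity, fun n hn => ?_⟩
  obtain ⟨Y, _, _, EY, hEYr, hY, hEY, hemb⟩ := hhost n hn
  let eqv : Y ⊕ Fin n ≃ Fin (Fintype.card (Y ⊕ Fin n)) := Fintype.equivFin _
  let ι : Y → Fin (Fintype.card (Y ⊕ Fin n)) := fun y => eqv (Sum.inl y)
  have hι : Function.Injective ι := eqv.injective.comp Sum.inl_injective
  refine ⟨_, EY.image fun s => s.image ι, ?_, ?_, ?_, ?_⟩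
  · intro e he
    obtain ⟨s, hs, rfl⟩ := Finset.mem_image.1 he
    rw [Finset.card_image_of_injective _ hι, hEYr s hs]
  · rw [Fintype.card_sum, Fintype.card_fin]
    have : (Fintype.card Y : ℝ) ≤ C * n := by exact_mod_cast hY
    push_cast
    linarith
  · have h1 : (EY.image fun s => s.image ι).card ^ 2 ≤ C * n ^ r :=
      (Nat.pow_le_pow_left Finset.card_image_le 2).trans hEY
    have h2 : (((EY.image fun s => s.image ι).card : ℕ) : ℝ) ^ 2 ≤ C * (n : ℝ) ^ r := by
      exact_mod_cast h1
    have h3 : ((n : ℝ) ^ ((r : ℝ) / 2)) ^ 2 = (n : ℝ) ^ r := by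
      rw [← Real.rpow_natCast _ 2, ← Real.rpow_mul (by positivity), ← Real.rpow_natCast _ r]
      congr 1
      push_cast
      ring
    apply le_of_sq_le_sq _ (by positivity)
    rw [mul_pow, h3]
    refine h2.trans ?_
    gcongr
    have : (1 : ℝ) ≤ C := by exact_mod_cast hC
    nlinarith
  · intro EF hEF hdeg
    let U := {v : Fin n // ∃ e ∈ EF, v ∈ e}
    have hends : ∀ u : U, ∃ e₁ e₂ : {e // e ∈ EF}, ∀ e : {e // e ∈ EF},
        u.1 ∈ e.1 ↔ e = e₁ ∨ e = e₂ := by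
      rintro ⟨v, e₀, he₀, hv⟩
      have h2 := hdeg v
      have hpos : 0 < (EF.filter fun e => v ∈ e).card := Finset.card_pos.2 ⟨e₀, by simp [he₀, hv]⟩
      obtain h | h : (EF.filter fun e => v ∈ e).card = 1 ∨
        (EF.filter fun e => v ∈ e).card = 2 := by omega
      · obtain ⟨a, ha⟩ := Finset.card_eq_one.1 h
        have haE : ∀ e, (e ∈ EF ∧ v ∈ e) ↔ e = a := fun e => by
          rw [← Finset.mem_filter (p := fun e => v ∈ e), ha, Finset.mem_singleton]
        refine ⟨⟨a, ((haE a).2 rfl).1⟩, ⟨a, ((haE a).2 rfl).1⟩, fun e => ?_⟩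
        have := haE e.1
        simp only [Subtype.ext_iff, e.2, true_and] at this ⊢
        tauto
      · obtain ⟨a, b, -, hab⟩ := Finset.card_eq_two.1 h
        have haE : ∀ e, (e ∈ EF ∧ v ∈ e) ↔ e = a ∨ e = b := fun e => by
          rw [← Finset.mem_filter (p := fun e => v ∈ e), hab, Finset.mem_insert,
            Finset.mem_singleton]
        refine ⟨⟨a, ((haE a).2 (Or.inl rfl)).1⟩, ⟨b, ((haE b).2 (Or.inr rfl)).1⟩, fun e => ?_⟩
        have := haE e.1
        simp only [Subtype.ext_iff, e.2, true_and] at this ⊢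
        tauto
    choose e₁ e₂ he using hends
    let I := {x : U × Bool // x.2 = true → e₁ x.1 ≠ e₂ x.1}
    let p : I → {e // e ∈ EF} × Bool := fun x => (e₁ x.1.1, x.1.2)
    let q : I → {e // e ∈ EF} × Bool := fun x =>
      (e₂ x.1.1, if e₁ x.1.1 = e₂ x.1.1 then !x.1.2 else x.1.2)
    have hinc : ∀ (x : I) (e : {e // e ∈ EF}) (b : Bool), (p x = (e, b) ∨ q x = (e, b)) ↔
        x.1.1.1 ∈ e.1 ∧ (e₁ x.1.1 = e₂ x.1.1 ∨ x.1.2 = b) := by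
      rintro ⟨⟨u, b'⟩, hx⟩ e b
      simp only [p, q, he, Prod.mk.injEq] at hx ⊢
      by_cases h : e₁ u = e₂ u
      · have hb' : b' = false := by
          cases b'
          · rfl
          · exact absurd h (hx rfl)
        subst hb'
        simp only [h, if_true, true_or, and_true, Bool.not_false]
        cases b <;> simp [eq_comm]
      · simp only [h, if_false, false_or, eq_comm (a := e)]
        tauto
    have hcard : Fintype.card I ≤ 2 * n := by
      calc Fintype.card I ≤ Fintype.card (U × Bool) := Fintype.card_subtype_le _
        _ = Fintype.card U * 2 := by rw [Fintype.card_prod, Fintype.card_bool]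
        _ ≤ n * 2 := Nat.mul_le_mul_right _ (by
          simpa using Fintype.card_subtype_le fun v : Fin n => ∃ e ∈ EF, v ∈ e)
        _ = 2 * n := mul_comm _ _
    have hreg : ∀ v, (Finset.univ.filter fun i => p i = v ∨ q i = v).card = r := by
      rintro ⟨e, b⟩
      rw [← hEF e.1 e.2]
      refine Finset.card_bij (fun x _ => x.1.1.1) ?_ ?_ ?_
      · intro x hx
        simp only [Finset.mem_filter, Finset.mem_univ, true_and, hinc] at hx
        exact hx.1
      · rintro ⟨⟨u, b'⟩, hx⟩ h1 ⟨⟨u', b''⟩, hx'⟩ h2 h12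
        obtain rfl : u = u' := Subtype.ext h12
        simp only [Finset.mem_filter, Finset.mem_univ, true_and, hinc] at h1 h2
        suffices b' = b'' by subst this; rfl
        have hf : ∀ b : Bool, e₁ u = e₂ u → (b = true → e₁ u ≠ e₂ u) → b = false := by
          intro b h h'
          cases b
          · rfl
          · exact absurd h (h' rfl)
        rcases h1.2 with h | h
        · exact (hf _ h hx).trans (hf _ h hx').symm
        · rcases h2.2 with h' | h'
          · exact (hf _ h' hx).trans (hf _ h' hx').symm
          · exact h.trans h'.symm
      · intro v hv
        have hu : ∃ e ∈ EF, v ∈ e := ⟨e.1, e.2, hv⟩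
        by_cases h : e₁ ⟨v, hu⟩ = e₂ ⟨v, hu⟩
        · exact ⟨⟨(⟨v, hu⟩, false), by simp⟩, by
            simp only [Finset.mem_filter, Finset.mem_univ, true_and, hinc]
            exact ⟨hv, Or.inl h⟩, rfl⟩
        · exact ⟨⟨(⟨v, hu⟩, b), fun _ => h⟩, by
            rw [Finset.mem_filter, hinc]
            exact ⟨Finset.mem_univ _, hv, Or.inr rfl⟩, rfl⟩
    have hpq : ∀ i, p i ≠ q i := by
      intro x h
      simp only [p, q, Prod.mk.injEq] at h
      rw [if_pos h.1] at h
      cases hb : x.1.2 <;> simp [hb] at h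
    obtain ⟨ψ, hψ, hψE⟩ := hemb _ I p q hcard (hsched _ _ p q hpq hreg)
    let first : ∀ v : Fin n, (∃ e ∈ EF, v ∈ e) → I := fun v hv => ⟨(⟨v, hv⟩, false), by simp⟩
    let φ : Fin n → Y ⊕ Fin n := fun v =>
      if hv : ∃ e ∈ EF, v ∈ e then Sum.inl (ψ (first v hv)) else Sum.inr v
    refine ⟨fun v => eqv (φ v), ?_, ?_⟩
    · intro v w hvw
      have h := eqv.injective hvw
      by_cases hv : ∃ e ∈ EF, v ∈ e <;> by_cases hw : ∃ e ∈ EF, w ∈ e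
      · simp only [φ, dif_pos hv, dif_pos hw] at h
        have := hψ (Sum.inl_injective h)
        exact congrArg (fun x : I => x.1.1.1) this
      · simp only [φ, dif_pos hv, dif_neg hw] at h
        exact absurd h (by simp)
      · simp only [φ, dif_neg hv, dif_pos hw] at h
        exact absurd h (by simp)
      · simp only [φ, dif_neg hv, dif_neg hw] at h
        exact Sum.inr_injective h
    · intro e heE
      refine Finset.mem_image.2 ⟨_, hψE (⟨e, heE⟩, false) (hreg _), ?_⟩
      ext z
      simp only [Finset.mem_image, Finset.mem_filter, Finset.mem_univ, true_and, hinc]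
      constructor
      · rintro ⟨_, ⟨⟨⟨u, b⟩, hx⟩, ⟨hue, hb⟩, rfl⟩, rfl⟩
        refine ⟨u.1, hue, ?_⟩
        have hb' : b = false := by
          simp only at hb hx
          rcases hb with h | h
          · cases b
            · rfl
            · exact absurd h (hx rfl)
          · exact h
        subst hb'
        simp only [φ, ι, dif_pos u.2]
        rfl
      · rintro ⟨v, hv, rfl⟩
        have hu : ∃ e ∈ EF, v ∈ e := ⟨e, heE, hv⟩
        refine ⟨ψ (first v hu), ⟨first v hu, ⟨hv, Or.inr rfl⟩, rfl⟩, ?_⟩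
        simp only [φ, ι, dif_pos hu]

/-- for every `r ≥ 2` there are `𝓕^(r)(n,2)`-universal `r`-uniform
hypergraphs with at most `C·n` vertices and at most `C·n^{r/2}` edges. -/
theorem universal_maxdegree_two (r : ℕ) (hr : 2 ≤ r) :
    ∃ C : ℝ, 0 < C ∧ ∀ n : ℕ, 1 ≤ n →
      ∃ (N : ℕ) (EH : Finset (Finset (Fin N))),
        (∀ e ∈ EH, e.card = r) ∧
        (N : ℝ) ≤ C * n ∧
        (EH.card : ℝ) ≤ C * (n : ℝ) ^ ((r : ℝ) / 2) ∧
        HypergraphUniversal r n 2 N EH := by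
  rcases Nat.even_or_odd r with he | ho
  · exact universal_of_schedule r 2 fun V I _ _ _ _ p q _ hdeg =>
      hasSchedule_even_regular r hr he p q hdeg
  · have hr3 : 3 ≤ r := by
      obtain ⟨k, rfl⟩ := ho
      omega
    exact universal_of_schedule r 12 fun V I _ _ _ _ p q hpq hdeg =>
      hasSchedule_odd_regular r hr3 ho p q hpq hdeg
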